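/- arXiv:1606.08621 — 7 statements merged into one kernel-verified Lean document; each statement's English description precedes it below -/
import Mathlib

section
/- Let G be a graph with X the projective toric subset it parameterizes, and let {v_1,...,v_r} be an independent set of r distinct vertices of G, i.e., no edge of G joins two vertices of this set. Assume there is an edge of G neither of whose endpoints belongs to {v_1,...,v_r}. Then reg(G) ≥ r(q−2). -/
open MvPolynomial

/-- A finite multigraph without loops: each edge `e` has two distinct endpoints
`fst e` and `snd e`.  Multiple edges with the same endpoints are allowed. -/
structure Multigraph (V E : Type) : Type where
  fst : E → V
  snd : E → V
  ne : ∀ e, fst e ≠ snd e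

namespace Multigraph

variable {V E : Type}

/-- Vertex `v` is an endpoint of the edge `e`. -/
def Incident (G : Multigraph V E) (v : V) (e : E) : Prop :=
  G.fst e = v ∨ G.snd e = v

instance (G : Multigraph V E) [DecidableEq V] (v : V) : DecidablePred (G.Incident v) :=
  fun e => inferInstanceAs (Decidable (G.fst e = v ∨ G.snd e = v))

/-- The degree of a vertex: the number of edges incident to it. -/
noncomputable def degree (G : Multigraph V E) (v : V) : ℕ :=
  Nat.card {e : E // G.Incident v e}

/-- The graph has no isolated vertices. -/
def NoIsolated (G : Multigraph V E) : Prop :=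
  ∀ v : V, ∃ e : E, G.Incident v e

variable (K : Type) [Field K] [Fintype K]

/-- The point of the affine torus associated with an assignment `x` of nonzero
scalars to the vertices: its coordinate at an edge `e = {v,w}` is `x v * x w`. -/
def point (G : Multigraph V E) (x : V → Kˣ) : E → K :=
  fun e => (x (G.fst e) : K) * (x (G.snd e) : K)

/-- The projective toric subset `X` parameterized by `G`, realized as the set of
`Kˣ`-orbits (i.e. projective points) of the points `G.point K x`, `x : V → Kˣ`. -/
def toricSet (G : Multigraph V E) : Set (Set (E → K)) :=
  Set.range fun x : V → Kˣ => MulAction.orbit Kˣ (G.point K x)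

/-- The vanishing ideal `I(X)` of the projective toric subset parameterized by `G`:
the ideal of all polynomials each of whose homogeneous components vanishes at the
point `G.point K x` for every `x : V → Kˣ`. -/
def vanishingIdeal (G : Multigraph V E) : Ideal (MvPolynomial E K) where
  carrier := {f | ∀ (x : V → Kˣ) (d : ℕ), eval (G.point K x) (homogeneousComponent d f) = 0}
  zero_mem' := by intro x d; simp
  add_mem' := by
    intro a b ha hb x d
    rw [map_add, map_add, ha x d, hb x d, add_zero]
  smul_mem' := by
    intro c f hf x n
    rw [smul_eq_mul, ← sum_homogeneousComponent f, Finset.mul_sum, map_sum, map_sum]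
    refine Finset.sum_eq_zero fun d _ => ?_
    nth_rewrite 1 [← sum_homogeneousComponent c]
    rw [Finset.sum_mul, map_sum, map_sum]
    refine Finset.sum_eq_zero fun e _ => ?_
    have h1 : (homogeneousComponent e c * homogeneousComponent d f).IsHomogeneous (e + d) :=
      (homogeneousComponent_isHomogeneous e c).mul (homogeneousComponent_isHomogeneous d f)
    rw [homogeneousComponent_of_mem ((mem_homogeneousSubmodule _ _).mpr h1)]
    split_ifs
    · rw [map_mul, hf x d, mul_zero]
    · simp

/-- The Hilbert function of `S/I(X)`: the dimension over `K` of the degree-`d`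
homogeneous component of the quotient, realized as the image of the space of
degree-`d` homogeneous polynomials in the quotient. -/
noncomputable def hilbert (G : Multigraph V E) (d : ℕ) : ℕ :=
  Module.finrank K
    ((homogeneousSubmodule E K d).map (Ideal.Quotient.mkₐ K (G.vanishingIdeal K)).toLinearMap)

/-- The regularity `reg G`: the least `d` such that the Hilbert function of `S/I(X)`
at `d` equals the number of points of `X`. -/
noncomputable def reg (G : Multigraph V E) : ℕ :=
  sInf {d : ℕ | G.hilbert K d = (G.toricSet K).ncard}

/-- The graph obtained from `G` by deleting a vertex `v` and all edges incident
to it. -/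
def deleteVert (G : Multigraph V E) (v : V) :
    Multigraph {w : V // w ≠ v} {e : E // ¬ G.Incident v e} where
  fst e := ⟨G.fst e.1, fun h => e.2 (Or.inl h)⟩
  snd e := ⟨G.snd e.1, fun h => e.2 (Or.inr h)⟩
  ne e h := G.ne e.1 (congrArg Subtype.val h)

/-- The graph obtained from `G` by identifying the vertex `v₂` with the vertex `v₁`:
the edges are the same, and every endpoint equal to `v₂` is replaced by `v₁`.
This requires that `{v₁, v₂}` is a non-edge of `G`, so that no loops are created. -/
def identifyVert [DecidableEq V] (G : Multigraph V E) (v₁ v₂ : V) (h12 : v₁ ≠ v₂)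
    (h : ∀ e, ¬ (G.Incident v₁ e ∧ G.Incident v₂ e)) :
    Multigraph {w : V // w ≠ v₂} E where
  fst e := ⟨if G.fst e = v₂ then v₁ else G.fst e, by split_ifs with hh; exacts [h12, hh]⟩
  snd e := ⟨if G.snd e = v₂ then v₁ else G.snd e, by split_ifs with hh; exacts [h12, hh]⟩
  ne := by
    intro e heq
    rw [Subtype.ext_iff] at heq
    simp only at heq
    split_ifs at heq with h1 h2 h2
    · exact G.ne e (h1.trans h2.symm)
    · exact h e ⟨Or.inr heq.symm, Or.inl h1⟩
    · exact h e ⟨Or.inl heq, Or.inr h2⟩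
    · exact G.ne e heq

/-- The subgraph of `G` determined by a set `A` of edges of `G`, together with all
endpoints of those edges (so it has no isolated vertices). -/
def subgraph [DecidableEq V] (G : Multigraph V E) (A : Finset E) :
    Multigraph {v : V // ∃ e ∈ A, G.Incident v e} {e : E // e ∈ A} where
  fst e := ⟨G.fst e.1, e.1, e.2, Or.inl rfl⟩
  snd e := ⟨G.snd e.1, e.1, e.2, Or.inr rfl⟩
  ne e h := G.ne e.1 (congrArg Subtype.val h)

end Multigraph

/-- The vertex of the parallel composition of paths of lengths `k i` lying on the
`i`-th path at distance `j` from the common initial vertex:  `j = 0` gives the common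
initial vertex, `j = k i` the common terminal vertex, and `0 < j < k i` gives the
`j`-th interior vertex of the `i`-th path. -/
def pcVert {ι : Type} (k : ι → ℕ) (i : ι) (j : ℕ) :
    Bool ⊕ ((i : ι) × Fin (k i - 1)) :=
  if h0 : j = 0 then Sum.inl false
  else if h : j < k i then Sum.inr ⟨i, ⟨j - 1, by omega⟩⟩
  else Sum.inl true

/-- The parallel composition of the family of paths `P i` of lengths `k i` (`i : ι`):
the `i`-th path has `k i` edges indexed by `Fin (k i)`, its `j`-th edge joining the
vertices of the `i`-th path at distances `j` and `j + 1` from the common initial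
vertex.  All the initial vertices of the paths are identified to a single vertex and
all the terminal vertices are identified to a single vertex. -/
def parallelComp {ι : Type} (k : ι → ℕ) :
    Multigraph (Bool ⊕ ((i : ι) × Fin (k i - 1))) ((i : ι) × Fin (k i)) where
  fst e := pcVert k e.1 e.2.1
  snd e := pcVert k e.1 (e.2.1 + 1)
  ne := by
    rintro ⟨i, j⟩ h
    have hj := j.2
    simp only [pcVert] at h
    split_ifs at h <;> simp_all <;> omega

/-- The monomial `f i`: the product of the edges of the `i`-th path of the parallel
composition in odd positions (positions `1, 3, 5, ...`, i.e. indices `0, 2, 4, ...`). -/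
noncomputable def oddProd {ι : Type} (K : Type) [Field K] (k : ι → ℕ) (i : ι) :
    MvPolynomial ((i : ι) × Fin (k i)) K :=
  ∏ m : Fin ((k i + 1) / 2), X ⟨i, ⟨2 * m.1, by have := m.2; omega⟩⟩

/-- The monomial `g i`: the product of the edges of the `i`-th path of the parallel
composition in even positions (positions `2, 4, 6, ...`, i.e. indices `1, 3, 5, ...`). -/
noncomputable def evenProd {ι : Type} (K : Type) [Field K] (k : ι → ℕ) (i : ι) :
    MvPolynomial ((i : ι) × Fin (k i)) K :=
  ∏ m : Fin (k i / 2), X ⟨i, ⟨2 * m.1 + 1, by have := m.2; omega⟩⟩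

namespace RegAux

variable {V E : Type} [Fintype E] (K : Type) [Field K] [Fintype K]

/-- Evaluation of a homogeneous polynomial at a rescaled point. -/
lemma eval_smul {d : ℕ} {f : MvPolynomial E K} (hf : f.IsHomogeneous d) (c : Kˣ) (P : E → K) :
    eval (c • P) f = (c : K) ^ d * eval P f := by
  rw [eval_eq', eval_eq', Finset.mul_sum]
  refine Finset.sum_congr rfl fun m hm => ?_
  have hdeg : ∑ e, m e = d := by
    have := hf (mem_support_iff.mp hm)
    rw [← this, Finsupp.weight_apply, Finsupp.sum_fintype _ _ (by simp)]
    simp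
  rw [← hdeg, ← Finset.prod_pow_eq_pow_sum]
  simp only [Pi.smul_apply, Units.smul_def, smul_eq_mul, mul_pow, Finset.prod_mul_distrib]
  ring

/-- A representative of a point of `X`. -/
noncomputable def rep (G : Multigraph V E) (p : G.toricSet K) : V → Kˣ := p.2.choose

lemma rep_spec (G : Multigraph V E) (p : G.toricSet K) :
    MulAction.orbit Kˣ (G.point K (rep K G p)) = p.1 := p.2.choose_spec

/-- The point of `X` given by parameters `x`. -/
def pt (G : Multigraph V E) (x : V → Kˣ) : G.toricSet K :=
  ⟨MulAction.orbit Kˣ (G.point K x), x, rfl⟩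

lemma exists_smul (G : Multigraph V E) (x : V → Kˣ) :
    ∃ c : Kˣ, c • G.point K (rep K G (pt K G x)) = G.point K x := by
  have h := rep_spec K G (pt K G x)
  have : G.point K x ∈ MulAction.orbit Kˣ (G.point K (rep K G (pt K G x))) := by
    rw [h]; exact MulAction.mem_orbit_self _
  exact this

/-- Evaluation at the representatives. -/
noncomputable def ev (G : Multigraph V E) : MvPolynomial E K →ₗ[K] (G.toricSet K → K) :=
  LinearMap.pi fun p => (aeval (G.point K (rep K G p))).toLinearMap

lemma ev_apply (G : Multigraph V E) (f : MvPolynomial E K) (p : G.toricSet K) :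
    ev K G f p = eval (G.point K (rep K G p)) f := by
  simp [ev, aeval_eq_eval]

lemma finrank_map_eq {M N N' : Type} [AddCommGroup M] [AddCommGroup N] [AddCommGroup N']
    [Module K M] [Module K N] [Module K N'] (p : Submodule K M) (A : M →ₗ[K] N) (B : M →ₗ[K] N')
    (h : ∀ f ∈ p, A f = 0 ↔ B f = 0) :
    Module.finrank K (p.map A) = Module.finrank K (p.map B) := by
  rw [← LinearMap.range_domRestrict, ← LinearMap.range_domRestrict]
  have hk : LinearMap.ker (A.domRestrict p) = LinearMap.ker (B.domRestrict p) := by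
    ext ⟨f, hf⟩
    simpa using h f hf
  exact (((A.domRestrict p).quotKerEquivRange.symm.trans (Submodule.quotEquivOfEq _ _ hk)).trans
    (B.domRestrict p).quotKerEquivRange).finrank_eq

lemma hilbert_eq (G : Multigraph V E) (d : ℕ) :
    G.hilbert K d = Module.finrank K ((homogeneousSubmodule E K d).map (ev K G)) := by
  refine finrank_map_eq K _ _ _ fun f hf => ?_
  have hf' : f.IsHomogeneous d := (mem_homogeneousSubmodule _ _).mp hf
  have h1 : (Ideal.Quotient.mkₐ K (G.vanishingIdeal K)).toLinearMap f = 0 ↔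
      f ∈ G.vanishingIdeal K := Ideal.Quotient.eq_zero_iff_mem
  rw [h1]
  constructor
  · intro h
    funext p
    have := h (rep K G p) d
    rw [homogeneousComponent_of_mem hf, if_pos rfl] at this
    rw [ev_apply, this]; rfl
  · intro h x n
    rw [homogeneousComponent_of_mem hf]
    split_ifs
    · obtain ⟨c, hc⟩ := exists_smul K G x
      rw [← hc, eval_smul K hf', ← ev_apply, h]
      simp
    · simp

lemma finite_toric [Finite V] (G : Multigraph V E) : Finite (G.toricSet K) := by
  unfold Multigraph.toricSet
  exact (Set.finite_range _)

lemma hilbert_eq_iff [Finite V] (G : Multigraph V E) (d : ℕ) :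
    G.hilbert K d = (G.toricSet K).ncard ↔ (homogeneousSubmodule E K d).map (ev K G) = ⊤ := by
  classical
  haveI := finite_toric K G
  haveI := Fintype.ofFinite (G.toricSet K)
  have hc : (G.toricSet K).ncard = Module.finrank K (G.toricSet K → K) := by
    rw [Module.finrank_fintype_fun_eq_card, ← Nat.card_eq_fintype_card]; rfl
  rw [hilbert_eq, hc]
  constructor
  · exact Submodule.eq_top_of_finrank_eq
  · intro h; rw [h, finrank_top]

lemma exists_top [Finite V] (G : Multigraph V E) (e₀ : E) :
    ∃ d, G.hilbert K d = (G.toricSet K).ncard := by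
  classical
  haveI := finite_toric K G
  haveI := Fintype.ofFinite (G.toricSet K)
  set q := Fintype.card K
  have hq : 1 < q := Fintype.one_lt_card
  refine ⟨∑ _e : E, (q - 1), (hilbert_eq_iff K G _).mpr ?_⟩
  let P : G.toricSet K → E → K := fun p => G.point K (rep K G p)
  have hP : ∀ p e, P p e ≠ 0 := fun p e => mul_ne_zero (Units.ne_zero _) (Units.ne_zero _)
  let F : G.toricSet K → MvPolynomial E K := fun p =>
    ∏ e : E, (X e₀ ^ (q - 1) - (C (P p e) * X e₀ - C (P p e₀) * X e) ^ (q - 1))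
  have hF : ∀ p, (F p).IsHomogeneous (∑ _e : E, (q - 1)) := by
    intro p
    refine IsHomogeneous.prod _ _ _ fun e _ => ?_
    refine IsHomogeneous.sub ?_ ?_
    · simpa using (isHomogeneous_X K e₀).pow (q - 1)
    · have : (C (P p e) * X e₀ - C (P p e₀) * X e : MvPolynomial E K).IsHomogeneous 1 :=
        ((isHomogeneous_X K e₀).C_mul _).sub ((isHomogeneous_X K e).C_mul _)
      simpa using this.pow (q - 1)
  have hev : ∀ p, ev K G (F p) = Pi.single p 1 := by
    intro p
    funext p'
    rw [ev_apply]
    change eval (P p') (F p) = _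
    simp only [F, map_prod, map_sub, map_pow, map_mul, eval_X, eval_C]
    by_cases h : p' = p
    · subst h
      rw [Pi.single_eq_same]
      refine Finset.prod_eq_one fun e _ => ?_
      rw [FiniteField.pow_card_sub_one_eq_one _ (hP p' e₀), mul_comm, sub_self, zero_pow (by omega),
        sub_zero]
    · rw [Pi.single_eq_of_ne h]
      have : ∃ e, P p e * P p' e₀ - P p e₀ * P p' e ≠ 0 := by
        by_contra hcon
        push Not at hcon
        apply h
        apply Subtype.ext
        rw [← rep_spec, ← rep_spec, MulAction.orbit_eq_iff]
        refine ⟨Units.mk0 (P p' e₀ / P p e₀) (div_ne_zero (hP _ _) (hP _ _)), ?_⟩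
        funext e
        change P p' e₀ / P p e₀ * P p e = P p' e
        have := hcon e
        have h0 := hP p e₀
        field_simp
        linear_combination this
      obtain ⟨e, he⟩ := this
      refine Finset.prod_eq_zero (Finset.mem_univ e) ?_
      rw [FiniteField.pow_card_sub_one_eq_one _ (hP p' e₀),
        FiniteField.pow_card_sub_one_eq_one _ he, sub_self]
  rw [eq_top_iff]
  intro g _
  rw [pi_eq_sum_univ g]
  refine Submodule.sum_mem _ fun p _ => Submodule.smul_mem _ _ ?_
  refine ⟨F p, (mem_homogeneousSubmodule _ _).mpr (hF p), ?_⟩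
  rw [hev]
  funext j
  simp [Pi.single_apply, eq_comm]

/-- The key degree bound. -/
lemma degree_bound [DecidableEq V] (G : Multigraph V E) (hG : G.NoIsolated) (r : ℕ)
    (v : Fin r → V) (hv : Function.Injective v)
    (hind : ∀ e : E, ¬ ((∃ i, v i = G.fst e) ∧ (∃ j, v j = G.snd e)))
    (hedge : ∃ e : E, (∀ i, v i ≠ G.fst e) ∧ (∀ i, v i ≠ G.snd e)) (d : ℕ)
    (f : MvPolynomial E K) (hf : f.IsHomogeneous d)
    (h1 : eval (G.point K 1) f ≠ 0)
    (h0 : ∀ x : V → Kˣ, eval (G.point K x) f ≠ 0 → ∃ c : Kˣ, c • G.point K 1 = G.point K x) :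
    r * (Fintype.card K - 2) ≤ d := by
  classical
  let n : Fin r → E → ℕ := fun i e =>
    (if v i = G.fst e then 1 else 0) + (if v i = G.snd e then 1 else 0)
  have hn : ∀ e, ∑ i, n i e ≤ 1 := by
    intro e
    have key : ∀ w : V, (∑ i, if v i = w then 1 else 0) ≤ 1 ∧
        ((∑ i, if v i = w then 1 else 0) ≠ 0 → ∃ i, v i = w) := by
      intro w
      constructor
      · rw [Finset.sum_boole]
        simp only [Nat.cast_id]
        refine Finset.card_le_one.mpr fun a ha b hb => hv ?_
        simp only [Finset.mem_filter] at ha hb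
        rw [ha.2, hb.2]
      · intro h
        obtain ⟨i, _, hi⟩ := Finset.exists_ne_zero_of_sum_ne_zero h
        exact ⟨i, by by_contra hh; simp [hh] at hi⟩
    simp only [n, Finset.sum_add_distrib]
    have ha := key (G.fst e)
    have hb := key (G.snd e)
    by_contra hcon
    exact hind e ⟨ha.2 (by omega), hb.2 (by omega)⟩
  let x : (Fin r → Kˣ) → V → Kˣ := fun y w => ∏ i, y i ^ (if v i = w then 1 else 0)
  have hx : ∀ y i, x y (v i) = y i := by
    intro y i
    simp [x, hv.eq_iff, pow_ite]
  have hx1 : x 1 = 1 := by funext w; simp [x]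
  have hpt : ∀ y e, G.point K (x y) e = ∏ i, (y i : K) ^ n i e := by
    intro y e
    simp only [Multigraph.point, x, n, pow_add, Finset.prod_mul_distrib, Units.coe_prod,
      Units.val_pow_eq_pow_val]
  have hxout : ∀ y w, (∀ i, v i ≠ w) → x y w = 1 := by
    intro y w hw
    simp [x, hw]
  have hvan : ∀ y, y ≠ 1 → eval (G.point K (x y)) f = 0 := by
    intro y hy
    by_contra hne
    obtain ⟨c, hc⟩ := h0 _ hne
    apply hy
    obtain ⟨e₀, ha, hb⟩ := hedge
    have hc1 : c = 1 := by
      have := congrFun hc e₀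
      simp only [Multigraph.point, hxout y _ ha, hxout y _ hb, Pi.smul_apply, Units.smul_def,
        Pi.one_apply, Units.val_one, mul_one, smul_eq_mul] at this
      exact Units.ext this
    subst hc1
    funext i
    obtain ⟨e, he⟩ := hG (v i)
    have hce := congrFun hc e
    simp only [Multigraph.point, Pi.smul_apply, one_smul, Pi.one_apply, Units.val_one,
      mul_one] at hce
    rcases he with he | he
    · have hs : x y (G.snd e) = 1 := hxout _ _ fun j hj => hind e ⟨⟨i, he.symm⟩, ⟨j, hj⟩⟩
      rw [hs, he, hx] at hce
      apply Units.ext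
      simpa using hce.symm
    · have hs : x y (G.fst e) = 1 := hxout _ _ fun j hj => hind e ⟨⟨j, hj⟩, ⟨i, he.symm⟩⟩
      rw [hs, he, hx] at hce
      apply Units.ext
      simpa using hce.symm
  have hsum : ∑ y : Fin r → Kˣ, (∏ i, (y i : K)) * eval (G.point K (x y)) f ≠ 0 := by
    rw [Finset.sum_eq_single 1]
    · simpa [hx1] using h1
    · intro y _ hy; rw [hvan y hy, mul_zero]
    · simp
  let a : (E →₀ ℕ) → Fin r → ℕ := fun m i => ∑ e, n i e * m e
  have hexp : ∑ y : Fin r → Kˣ, (∏ i, (y i : K)) * eval (G.point K (x y)) f =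
      ∑ m ∈ f.support, coeff m f * ∏ i, ∑ u : Kˣ, (u : K) ^ (1 + a m i) := by
    simp_rw [eval_eq', Finset.mul_sum]
    rw [Finset.sum_comm]
    refine Finset.sum_congr rfl fun m _ => ?_
    rw [Fintype.prod_sum, Finset.mul_sum]
    refine Finset.sum_congr rfl fun y _ => ?_
    simp_rw [hpt, pow_add, pow_one, Finset.prod_mul_distrib, a, ← Finset.prod_pow_eq_pow_sum,
      pow_mul, ← Finset.prod_pow]
    rw [Finset.prod_comm]
    ring
  rw [hexp] at hsum
  obtain ⟨m, hm, hne⟩ := Finset.exists_ne_zero_of_sum_ne_zero hsum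
  have hdeg : ∑ e, m e = d := by
    have := hf (mem_support_iff.mp hm)
    rw [← this, Finsupp.weight_apply, Finsupp.sum_fintype _ _ (by simp)]
    simp
  have hge : ∀ i, Fintype.card K - 2 ≤ a m i := by
    intro i
    have h2 := Finset.prod_ne_zero_iff.mp (right_ne_zero_of_mul hne) i (Finset.mem_univ i)
    rw [FiniteField.sum_pow_units] at h2
    have h3 : Fintype.card K - 1 ∣ 1 + a m i := by
      by_contra hh; simp [hh] at h2
    have := Nat.le_of_dvd (by omega) h3
    omega
  calc r * (Fintype.card K - 2) = ∑ _i : Fin r, (Fintype.card K - 2) := by simp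
    _ ≤ ∑ i, a m i := Finset.sum_le_sum fun i _ => hge i
    _ = ∑ e, (∑ i, n i e) * m e := by
        simp only [a]; rw [Finset.sum_comm]; simp_rw [Finset.sum_mul]
    _ ≤ ∑ e, m e := Finset.sum_le_sum fun e _ => by
        simpa using Nat.mul_le_mul_right (m e) (hn e)
    _ = d := hdeg

end RegAux

/-- **Proposition 2.8.**  Let `v 0, ..., v (r-1)` be an independent set of `r`
distinct vertices of `G` and assume there is an edge of `G` avoiding all of them.
Then `reg G ≥ r(q-2)`, where `q = |K|`. -/
theorem reg_ge_of_independent_set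
    {V E : Type} [Fintype V] [DecidableEq V] [Fintype E] [DecidableEq E]
    (K : Type) [Field K] [Fintype K]
    (G : Multigraph V E) (hG : G.NoIsolated) (r : ℕ)
    (v : Fin r → V) (hv : Function.Injective v)
    (hind : ∀ e : E, ¬ ((∃ i, v i = G.fst e) ∧ (∃ j, v j = G.snd e)))
    (hedge : ∃ e : E, (∀ i, v i ≠ G.fst e) ∧ (∀ i, v i ≠ G.snd e)) :
    r * (Fintype.card K - 2) ≤ G.reg K := by
  have hne : {d : ℕ | G.hilbert K d = (G.toricSet K).ncard}.Nonempty :=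
    RegAux.exists_top K G hedge.choose
  have hmem : G.hilbert K (G.reg K) = (G.toricSet K).ncard := Nat.sInf_mem hne
  have htop := (RegAux.hilbert_eq_iff K G _).mp hmem
  classical
  have hs : (Pi.single (RegAux.pt K G 1) 1 : G.toricSet K → K) ∈
      (homogeneousSubmodule E K (G.reg K)).map (RegAux.ev K G) := by rw [htop]; trivial
  obtain ⟨f, hf, hfe⟩ := hs
  have hf' : f.IsHomogeneous (G.reg K) := (mem_homogeneousSubmodule _ _).mp hf
  have hval : ∀ x : V → Kˣ, ∃ c : Kˣ, eval (G.point K x) f = (c : K) *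
      (Pi.single (RegAux.pt K G 1) 1 : G.toricSet K → K) (RegAux.pt K G x) := by
    intro x
    obtain ⟨c, hc⟩ := RegAux.exists_smul K G x
    refine ⟨c ^ G.reg K, ?_⟩
    rw [← hfe, RegAux.ev_apply]
    nth_rewrite 1 [← hc]
    rw [RegAux.eval_smul K hf', Units.val_pow_eq_pow_val]
  refine RegAux.degree_bound K G hG r v hv hind hedge _ f hf' ?_ ?_
  · obtain ⟨c, hc⟩ := hval 1
    rw [hc]; simp
  · intro x hx
    obtain ⟨c, hc⟩ := hval x
    have hp : RegAux.pt K G x = RegAux.pt K G 1 := by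
      by_contra hh
      rw [hc, Pi.single_eq_of_ne hh, mul_zero] at hx
      exact hx rfl
    have ho : MulAction.orbit Kˣ (G.point K x) = MulAction.orbit Kˣ (G.point K 1) :=
      congrArg Subtype.val hp
    exact MulAction.orbit_eq_iff.mp ho
end

section
/- Let G be the parallel composition of r ≥ 2 paths of even lengths k_1,...,k_r, and let X be the projective toric subset parameterized by G. Then reg(G) ≤ (k_1/2 + ... + k_r/2 − 1)(q−2). -/
open MvPolynomial

lemma eval_smul_of_homog {K E : Type} [Field K] (f : MvPolynomial E K) {D : ℕ}
    (hf : f.IsHomogeneous D) (c : K) (p : E → K) :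
    eval (c • p) f = c ^ D * eval p f := by
  rw [eval_eq, eval_eq, Finset.mul_sum]
  refine Finset.sum_congr rfl fun α hα => ?_
  have h := hf (mem_support_iff.mp hα)
  rw [show Finsupp.weight 1 α = α.degree by rw [Finsupp.degree_eq_weight_one]; rfl] at h
  simp only [Pi.smul_apply, smul_eq_mul, mul_pow, Finset.prod_mul_distrib]
  rw [Finset.prod_pow_eq_pow_sum, ← h]
  change _ * (c ^ α.degree * _) = _
  ring

/-- Every form of degree `D + N * M` agrees on the torus points with a form of degree `D`. -/
lemma exists_low_form {K V E : Type} [Field K] [Fintype K]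
    (G : Multigraph V E) (D : ℕ) (M : ℕ)
    (H : ∀ α : E →₀ ℕ, α.degree = D + (Fintype.card K - 1) * M →
      ∃ β : E →₀ ℕ, β.degree = D ∧ ∀ x : V → Kˣ,
        eval (G.point K x) (monomial β (1 : K)) = eval (G.point K x) (monomial α (1 : K)))
    (f : MvPolynomial E K) (hf : f.IsHomogeneous (D + (Fintype.card K - 1) * M)) :
    ∃ g : MvPolynomial E K, g.IsHomogeneous D ∧
      ∀ x : V → Kˣ, eval (G.point K x) g = eval (G.point K x) f := by
  classical
  have H' : ∀ α : E →₀ ℕ, ∃ β : E →₀ ℕ, α ∈ f.support → β.degree = D ∧ ∀ x : V → Kˣ,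
        eval (G.point K x) (monomial β (1 : K)) = eval (G.point K x) (monomial α (1 : K)) := by
    intro α
    by_cases h : α ∈ f.support
    · obtain ⟨β, hβ⟩ := H α (by
        have := hf (mem_support_iff.mp h)
        rwa [show Finsupp.weight 1 α = α.degree by rw [Finsupp.degree_eq_weight_one]; rfl] at this)
      exact ⟨β, fun _ => hβ⟩
    · exact ⟨0, fun h' => absurd h' h⟩
  choose b hb using H'
  refine ⟨∑ α ∈ f.support, C (f.coeff α) * monomial (b α) (1 : K), ?_, ?_⟩
  · refine IsHomogeneous.sum _ _ _ fun α hα => ?_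
    have h1 := (isHomogeneous_C E (f.coeff α)).mul
      (isHomogeneous_monomial (1 : K) (hb α hα).1)
    rwa [zero_add] at h1
  · intro x
    conv_rhs => rw [f.as_sum]
    rw [map_sum, map_sum]
    refine Finset.sum_congr rfl fun α hα => ?_
    rw [map_mul, (hb α hα).2 x, ← map_mul, C_mul_monomial, mul_one]

lemma hilbert_eq_ncard {K V E : Type} [Field K] [Fintype K] [Finite V] [Fintype E]
    (G : Multigraph V E) (D : ℕ) (e0 : E)
    (H : ∀ M : ℕ, ∀ α : E →₀ ℕ, α.degree = D + (Fintype.card K - 1) * M →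
      ∃ β : E →₀ ℕ, β.degree = D ∧ ∀ x : V → Kˣ,
        eval (G.point K x) (monomial β (1 : K)) = eval (G.point K x) (monomial α (1 : K))) :
    G.hilbert K D = (G.toricSet K).ncard := by
  classical
  have hfin : (G.toricSet K).Finite := Set.finite_range _
  have : Fintype (G.toricSet K) := hfin.fintype
  have hρ : ∀ y : G.toricSet K, ∃ x : V → Kˣ, MulAction.orbit Kˣ (G.point K x) = y.1 :=
    fun y => y.2
  choose ρ hρ using hρ
  let ev0 : MvPolynomial E K →ₗ[K] (G.toricSet K → K) :=
    LinearMap.pi fun y => (aeval (G.point K (ρ y))).toLinearMap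
  have ev0_apply : ∀ f y, ev0 f y = eval (G.point K (ρ y)) f := by
    intro f y
    simp [ev0, aeval_eq_eval]
  let ev := ev0.domRestrict (homogeneousSubmodule E K D)
  let mk := (Ideal.Quotient.mkₐ K (G.vanishingIdeal K)).toLinearMap.domRestrict
    (homogeneousSubmodule E K D)
  have hker : LinearMap.ker mk = LinearMap.ker ev := by
    ext ⟨f, hf⟩
    rw [mem_homogeneousSubmodule] at hf
    have h1 : mk ⟨f, hf⟩ = 0 ↔ f ∈ G.vanishingIdeal K := by
      simp [mk, Ideal.Quotient.eq_zero_iff_mem]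
    rw [LinearMap.mem_ker, LinearMap.mem_ker, h1]
    constructor
    · intro h
      funext y
      have := h (ρ y) D
      rw [homogeneousComponent_of_mem ((mem_homogeneousSubmodule _ _).mpr hf), if_pos rfl] at this
      change ev0 f y = 0
      rw [ev0_apply, this]
    · intro h x d
      rw [homogeneousComponent_of_mem ((mem_homogeneousSubmodule _ _).mpr hf)]
      split_ifs with hd
      · have hy : MulAction.orbit Kˣ (G.point K (ρ ⟨_, x, rfl⟩)) =
            MulAction.orbit Kˣ (G.point K x) := hρ ⟨_, x, rfl⟩
        have hx : G.point K x ∈ MulAction.orbit Kˣ (G.point K x) := MulAction.mem_orbit_self _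
        rw [← hy] at hx
        obtain ⟨c, hc⟩ := hx
        have h2 := congrFun h ⟨_, x, rfl⟩
        change ev0 f _ = 0 at h2
        rw [ev0_apply] at h2
        rw [← hc]
        have h4 : (c • G.point K (ρ ⟨_, x, rfl⟩)) = (c : K) • G.point K (ρ ⟨_, x, rfl⟩) := rfl
        change eval (c • G.point K (ρ ⟨_, x, rfl⟩)) f = 0
        rw [h4, eval_smul_of_homog f hf, h2, mul_zero]
      · simp
  have hsurj : LinearMap.range ev = ⊤ := by
    rw [eq_top_iff, ← (Pi.basisFun K (G.toricSet K)).span_eq, Submodule.span_le]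
    rintro _ ⟨y, rfl⟩
    set p := G.point K (ρ y) with hp
    have hpt : ∀ x e, G.point K x e ≠ 0 := by
      intro x e
      simp [Multigraph.point]
    have hN : Fintype.card K - 1 ≠ 0 := by
      have := Fintype.one_lt_card (α := K)
      omega
    let F : MvPolynomial E K := (X e0) ^ D * ∏ e : E,
      ((X e0) ^ (Fintype.card K - 1) -
        (C (p e0) * X e - C (p e) * X e0) ^ (Fintype.card K - 1))
    have hF : F.IsHomogeneous (D + (Fintype.card K - 1) * Fintype.card E) := by
      have hX : ∀ (a : K) (e : E), (C a * X e : MvPolynomial E K).IsHomogeneous 1 := by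
        intro a e
        have := (isHomogeneous_C E a).mul (isHomogeneous_X K e)
        rwa [zero_add] at this
      refine IsHomogeneous.mul ?_ ?_
      · simpa using (isHomogeneous_X K e0).pow D
      · have := IsHomogeneous.prod (Finset.univ : Finset E)
          (fun e => ((X e0 : MvPolynomial E K) ^ (Fintype.card K - 1) -
        (C (p e0) * X e - C (p e) * X e0) ^ (Fintype.card K - 1)))
          (fun _ => Fintype.card K - 1) (fun e _ => by
            refine IsHomogeneous.sub ?_ ?_
            · simpa using (isHomogeneous_X K e0).pow (Fintype.card K - 1)
            · simpa using ((hX (p e0) e).sub (hX (p e) e0)).pow (Fintype.card K - 1))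
        simpa [mul_comm] using this
    obtain ⟨g, hg, hgF⟩ := exists_low_form G D _ (H _) F hF
    have hFx : ∀ x, eval (G.point K x) F = (G.point K x e0) ^ D * ∏ e : E,
      (1 - (p e0 * G.point K x e - p e * G.point K x e0) ^ (Fintype.card K - 1)) := by
      intro x
      simp only [F, map_mul, map_prod, map_sub, map_pow, eval_X, eval_C]
      rw [FiniteField.pow_card_sub_one_eq_one _ (hpt x e0)]
    have hev : ev0 g = (p e0 ^ D) • Pi.basisFun K (G.toricSet K) y := by
      funext z
      rw [ev0_apply, hgF, hFx]
      by_cases hz : z = y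
      · subst hz
        have : ∀ e, 1 - (p e0 * G.point K (ρ z) e - p e * G.point K (ρ z) e0) ^
            (Fintype.card K - 1) = 1 := by
          intro e
          rw [← hp, mul_comm, sub_self, zero_pow hN, sub_zero]
        rw [Finset.prod_congr rfl (fun e _ => this e)]
        simp [hp]
      · have hne : ∃ e, p e0 * G.point K (ρ z) e - p e * G.point K (ρ z) e0 ≠ 0 := by
          by_contra hcon
          push Not at hcon
          apply hz
          apply Subtype.ext
          rw [← hρ z, ← hρ y, MulAction.orbit_eq_iff]
          refine ⟨Units.mk0 (G.point K (ρ z) e0 / p e0) (div_ne_zero (hpt _ _) (hpt _ _)), ?_⟩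
          funext e
          have h1 := hcon e
          have h2 : p e0 ≠ 0 := hpt _ _
          change G.point K (ρ z) e0 / p e0 * p e = _
          field_simp
          linear_combination -h1
        obtain ⟨e, he⟩ := hne
        rw [Finset.prod_eq_zero (Finset.mem_univ e), mul_zero]
        · simp [hz]
        · rw [FiniteField.pow_card_sub_one_eq_one _ he, sub_self]
    refine ⟨(p e0 ^ D)⁻¹ • ⟨g, (mem_homogeneousSubmodule _ _).mpr hg⟩, ?_⟩
    rw [map_smul]
    change _ • ev0 g = _
    rw [hev, smul_smul, inv_mul_cancel₀ (pow_ne_zero _ (hpt _ _)), one_smul]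
  have e1 : G.hilbert K D = Module.finrank K (LinearMap.range mk) := by
    unfold Multigraph.hilbert
    rw [LinearMap.range_domRestrict]
  rw [e1, ← (mk.quotKerEquivRange).finrank_eq, hker, (ev.quotKerEquivRange).finrank_eq, hsurj,
    finrank_top, Module.finrank_fintype_fun_eq_card, ← Nat.card_eq_fintype_card,
    Nat.card_coe_set_eq]

lemma exists_le_avg {N : ℕ} [NeZero N] (F : ZMod N → ℕ) (m : ℕ)
    (h : ∑ c, F c = N * m) : ∃ c, F c ≤ m := by
  by_contra hcon
  push Not at hcon
  have h1 : ∑ _c : ZMod N, (m + 1) ≤ ∑ c, F c := Finset.sum_le_sum fun c _ => hcon c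
  rw [h] at h1
  simp only [Finset.sum_const, Finset.card_univ, ZMod.card, smul_eq_mul] at h1
  have : 0 < N := Nat.pos_of_ne_zero (NeZero.ne N)
  nlinarith

lemma exists_shift {N : ℕ} [NeZero N] (s : ℕ) (F : Fin (s + 2) → ZMod N → ℕ)
    (m : Fin (s + 2) → ℕ) (h : ∀ i, ∑ c, F i c = N * m i) :
    ∃ c : Fin (s + 2) → ZMod N, ∑ i, c i = 0 ∧ ∑ i, F i (c i) ≤ ∑ i, m i := by
  have h1 : ∀ i : Fin s, ∃ c, F i.succ.succ c ≤ m i.succ.succ :=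
    fun i => exists_le_avg _ _ (h _)
  choose d hd using h1
  obtain ⟨c, hc⟩ := exists_le_avg (fun c => F 0 ((-∑ i, d i) - c) + F 1 c) (m 0 + m 1) (by
    have h0 := Equiv.sum_comp (Equiv.subLeft (-∑ i, d i)) (fun c => F 0 c)
    simp only [Equiv.subLeft_apply] at h0
    rw [Finset.sum_add_distrib, h 1, h0, h 0]
    ring)
  refine ⟨Fin.cons ((-∑ i, d i) - c) (Fin.cons c d), ?_, ?_⟩
  · simp only [Fin.sum_univ_succ, Fin.cons_zero, Fin.cons_succ]
    ring
  · have h2 := Finset.sum_le_sum fun i (_ : i ∈ Finset.univ) => hd i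
    simp only [Fin.sum_univ_succ, Fin.cons_zero, Fin.cons_succ, Fin.succ_zero_eq_one] at *
    omega

lemma two_mul_sum_val (N : ℕ) [NeZero N] : 2 * ∑ c : ZMod N, c.val = N * (N - 1) := by
  obtain ⟨n, rfl⟩ := Nat.exists_eq_succ_of_ne_zero (NeZero.ne N)
  have : ∑ c : ZMod (n + 1), c.val = ∑ i ∈ Finset.range (n + 1), i :=
    Fin.sum_univ_eq_sum_range (fun i => i) (n + 1)
  have h2 := Finset.sum_range_id_mul_two (n + 1)
  rw [← this, mul_comm] at h2
  exact h2

lemma two_mul_sum_val_shift (N : ℕ) [NeZero N] (a : ZMod N) (j : ℕ) :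
    2 * ∑ c : ZMod N, (a + (-1) ^ j * c).val = N * (N - 1) := by
  rw [← two_mul_sum_val]
  congr 1
  rcases neg_one_pow_eq_or (ZMod N) j with h | h
  · simp only [h, one_mul]
    exact Equiv.sum_comp (Equiv.addLeft a) (fun c : ZMod N => c.val)
  · simp only [h, neg_one_mul, ← sub_eq_add_neg]
    exact Equiv.sum_comp (Equiv.subLeft a) (fun c : ZMod N => c.val)

/-- Powers with exponent in `ZMod N`. -/
lemma pow_val_add {M : Type} [Group M] {N : ℕ} [NeZero N] (u : M) (hu : u ^ N = 1)
    (a b : ZMod N) : u ^ (a + b).val = u ^ a.val * u ^ b.val := by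
  rw [ZMod.val_add, ← pow_add]
  exact (pow_eq_pow_mod _ hu).symm

lemma pow_val_natCast {M : Type} [Group M] {N : ℕ} [NeZero N] (u : M) (hu : u ^ N = 1)
    (a : ℕ) : u ^ (a : ZMod N).val = u ^ a := by
  rw [ZMod.val_natCast]
  exact (pow_eq_pow_mod _ hu).symm

lemma pow_val_neg {M : Type} [Group M] {N : ℕ} [NeZero N] (u : M) (hu : u ^ N = 1)
    (a : ZMod N) : u ^ (-a).val = (u ^ a.val)⁻¹ := by
  rw [eq_inv_iff_mul_eq_one, ← pow_val_add u hu]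
  simp

lemma telescope {M : Type} [CommGroup M] {N : ℕ} [NeZero N] (hM : ∀ u : M, u ^ N = 1)
    (y : ℕ → M) (c : ZMod N) (m : ℕ) :
    ∏ j ∈ Finset.range (2 * m), (y j * y (j + 1)) ^ ((-1) ^ j * c).val =
      (y 0 * (y (2 * m))⁻¹) ^ c.val := by
  induction m with
  | zero => simp
  | succ m ih =>
    rw [show 2 * (m + 1) = 2 * m + 1 + 1 by ring, Finset.prod_range_succ, Finset.prod_range_succ,
      ih]
    have h1 : (-1 : ZMod N) ^ (2 * m) * c = c := by simp [pow_mul]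
    have h2 : (-1 : ZMod N) ^ (2 * m + 1) * c = -c := by simp [pow_succ, pow_mul]
    rw [h1, h2, pow_val_neg _ (hM _)]
    simp only [mul_pow, inv_pow, mul_inv]
    generalize y 0 ^ c.val = A
    generalize y (2 * m) ^ c.val = B
    generalize y (2 * m + 1) ^ c.val = B'
    generalize y (2 * m + 1 + 1) ^ c.val = B''
    calc _ = A * B''⁻¹ * (B⁻¹ * B) * (B' * B'⁻¹) := by
          simp only [mul_assoc, mul_comm, mul_left_comm]
      _ = _ := by simp

lemma sum_alt_zero {N : ℕ} (c : ZMod N) (m : ℕ) :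
    ∑ j ∈ Finset.range (2 * m), ((-1) ^ j * c) = 0 := by
  induction m with
  | zero => simp
  | succ m ih =>
    rw [show 2 * (m + 1) = 2 * m + 1 + 1 by ring, Finset.sum_range_succ, Finset.sum_range_succ,
      ih]
    simp [pow_succ, pow_mul]

/-- The combinatorial heart. -/
lemma exists_low_exponent (K : Type) [Field K] [Fintype K] (s : ℕ)
    (m : Fin (s + 2) → ℕ) (k : Fin (s + 2) → ℕ) (hkm : ∀ i, k i = 2 * m i) (hk : ∀ i, 0 < k i)
    (M : ℕ) (α : ((i : Fin (s + 2)) × Fin (k i)) →₀ ℕ)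
    (hα : α.degree = ((∑ i, m i) - 1) * (Fintype.card K - 2) + (Fintype.card K - 1) * M) :
    ∃ β : ((i : Fin (s + 2)) × Fin (k i)) →₀ ℕ,
      β.degree = ((∑ i, m i) - 1) * (Fintype.card K - 2) ∧
      ∀ x : _ → Kˣ, eval ((parallelComp k).point K x) (monomial β (1 : K)) =
        eval ((parallelComp k).point K x) (monomial α (1 : K)) := by
  classical
  obtain ⟨L, hL⟩ : ∃ L, Fintype.card K = L + 2 := by
    have := Fintype.one_lt_card (α := K)
    exact ⟨Fintype.card K - 2, by omega⟩
  have hN : Fintype.card K - 1 = L + 1 := by omega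
  have hN2 : Fintype.card K - 2 = L := by omega
  rw [hN, hN2] at hα
  rw [hN2]
  have hu : ∀ u : Kˣ, u ^ (L + 1) = 1 := by
    intro u
    rw [← hN, ← Fintype.card_units]
    exact pow_card_eq_one
  obtain ⟨n, hn⟩ : ∃ n, ∑ i, m i = n + 1 := by
    have h0 : m 0 ≤ ∑ i, m i := Finset.single_le_sum (fun _ _ => Nat.zero_le _) (Finset.mem_univ 0)
    have := hk 0
    have := hkm 0
    exact ⟨(∑ i, m i) - 1, by omega⟩
  rw [hn, Nat.add_sub_cancel] at hα ⊢
  -- the averaging step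
  obtain ⟨c, hc0, hc⟩ := exists_shift (N := L + 1) s
    (fun i c => ∑ j : Fin (k i), ((α ⟨i, j⟩ : ZMod (L + 1)) + (-1) ^ (j : ℕ) * c).val)
    (fun i => m i * L) (by
      intro i
      rw [Finset.sum_comm]
      apply Nat.eq_of_mul_eq_mul_left (show 0 < 2 by norm_num)
      rw [Finset.mul_sum]
      simp only [two_mul_sum_val_shift]
      rw [Finset.sum_const, Finset.card_univ, Fintype.card_fin, hkm i]
      simp
      ring)
  rw [← Finset.sum_mul, hn] at hc
  let b : ((i : Fin (s + 2)) × Fin (k i)) → ZMod (L + 1) :=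
    fun e => (α e : ZMod (L + 1)) + (-1) ^ (e.2 : ℕ) * c e.1
  have hT : ∑ e, (b e).val ≤ (n + 1) * L := by
    rw [Fintype.sum_sigma]
    exact hc
  have hTmod : ((∑ e, (b e).val : ℕ) : ZMod (L + 1)) = ((n * L : ℕ) : ZMod (L + 1)) := by
    have h1 : ∑ e : (i : Fin (s + 2)) × Fin (k i), (-1 : ZMod (L + 1)) ^ (e.2 : ℕ) * c e.1 = 0 := by
      rw [Fintype.sum_sigma]
      refine Finset.sum_eq_zero fun i _ => ?_
      rw [Fin.sum_univ_eq_sum_range (fun j => (-1 : ZMod (L + 1)) ^ j * c i) (k i), hkm i]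
      exact sum_alt_zero _ _
    have h2 : ∑ e, α e = n * L + (L + 1) * M := by
      rw [← hα, Finsupp.degree_eq_sum]
    rw [Nat.cast_sum]
    simp only [ZMod.natCast_zmod_val, b]
    rw [Finset.sum_add_distrib, h1, add_zero, ← Nat.cast_sum, h2, Nat.cast_add, Nat.cast_mul (L + 1),
      ZMod.natCast_self, zero_mul, add_zero]
  obtain ⟨Q, hQ⟩ : ∃ Q, ∑ e, (b e).val + (L + 1) * Q = n * L := by
    rw [ZMod.natCast_eq_natCast_iff] at hTmod
    have hle : ∑ e, (b e).val ≤ n * L := by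
      by_contra hlt
      push Not at hlt
      have hd := (Nat.modEq_iff_dvd' hlt.le).mp hTmod.symm
      have := Nat.le_of_dvd (by omega) hd
      rw [add_mul, one_mul] at hT
      omega
    obtain ⟨Q, hQ⟩ := (Nat.modEq_iff_dvd' hle).mp hTmod
    exact ⟨Q, by omega⟩
  let e0 : (i : Fin (s + 2)) × Fin (k i) := ⟨0, ⟨0, hk 0⟩⟩
  refine ⟨Finsupp.equivFunOnFinite.symm (fun e => (b e).val) + Finsupp.single e0 ((L + 1) * Q),
    ?_, ?_⟩
  · rw [map_add, Finsupp.degree_single, Finsupp.degree_eq_sum, ← hQ]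
    simp
  · intro x
    have hpt : ∀ e, (parallelComp k).point K x e =
        ((x (pcVert k e.1 e.2) * x (pcVert k e.1 (e.2 + 1)) : Kˣ) : K) := by
      intro e
      simp [Multigraph.point, parallelComp]
    have hev : ∀ γ : ((i : Fin (s + 2)) × Fin (k i)) →₀ ℕ,
        eval ((parallelComp k).point K x) (monomial γ (1 : K)) =
        ((∏ e, (x (pcVert k e.1 e.2) * x (pcVert k e.1 (e.2 + 1))) ^ γ e : Kˣ) : K) := by
      intro γ
      rw [eval_monomial, one_mul, Finsupp.prod_fintype _ _ (fun _ => pow_zero _)]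
      simp only [hpt]
      push_cast
      rfl
    rw [hev, hev]
    congr 1
    have hS : ∀ e, (Finsupp.single e0 ((L + 1) * Q)) e = (L + 1) * (Finsupp.single e0 Q) e := by
      intro e
      simp only [Finsupp.single_apply]
      split_ifs <;> simp
    simp only [Finsupp.add_apply, hS, Finsupp.equivFunOnFinite_symm_apply_apply, pow_add _ _ (_ * _),
      pow_mul _ (L + 1), hu, one_pow, mul_one, b, pow_val_add _ (hu _), pow_val_natCast _ (hu _)]
    rw [Finset.prod_mul_distrib]
    convert mul_one _
    rw [Fintype.prod_sigma]
    have h3 : ∀ i, ∏ j : Fin (k i), (x (pcVert k i j) * x (pcVert k i (j + 1))) ^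
        ((-1) ^ (j : ℕ) * c i).val = (x (Sum.inl false) * (x (Sum.inl true))⁻¹) ^ (c i).val := by
      intro i
      rw [Fin.prod_univ_eq_prod_range (fun j => (x (pcVert k i j) * x (pcVert k i (j + 1))) ^
        ((-1) ^ j * c i).val) (k i)]
      have h4 := telescope hu (fun j => x (pcVert k i j)) (c i) (m i)
      rw [← hkm i] at h4
      rw [h4]
      have := hk i
      simp [pcVert, this.ne']
    simp only [h3]
    rw [Finset.prod_pow_eq_pow_sum, ← pow_val_natCast _ (hu _), Nat.cast_sum]
    simp [hc0]

/-- **Proposition 3.2.**  Let `G` be the parallel composition of `r ≥ 2` paths of even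
lengths `k 0, ..., k (r-1)`.  Then `reg G ≤ (k 0/2 + ... + k (r-1)/2 - 1)(q-2)`,
where `q = |K|`. -/
theorem reg_parallelComp_even_upper_bound
    (K : Type) [Field K] [Fintype K] (r : ℕ) (hr : 2 ≤ r)
    (k : Fin r → ℕ) (hk : ∀ i, 0 < k i) (heven : ∀ i, Even (k i)) :
    (parallelComp k).reg K ≤ ((∑ i, k i / 2) - 1) * (Fintype.card K - 2) := by
  obtain ⟨s, rfl⟩ : ∃ s, r = s + 2 := ⟨r - 2, by omega⟩
  have hkm : ∀ i, k i = 2 * (k i / 2) := by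
    intro i
    obtain ⟨a, ha⟩ := heven i
    omega
  apply Nat.sInf_le
  exact hilbert_eq_ncard (parallelComp k) _ ⟨0, ⟨0, hk 0⟩⟩
    (fun M α hα => exists_low_exponent K s (fun i => k i / 2) k hkm hk M α hα)
end

section
/- Let G be the parallel composition of r ≥ 2 paths of odd lengths k_1,...,k_r, and let X be the projective toric subset parameterized by G. Then reg(G) ≤ (⌊k_1/2⌋ + ... + ⌊k_r/2⌋)(q−2). -/
open MvPolynomial

namespace PCProof

open Multigraph

section General

variable {V E : Type} [Fintype V] [Fintype E] (K : Type) [Field K] [Fintype K]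

/-- A point-separating subalgebra of functions on a finite set is everything. -/
lemma subalgebra_eq_top {X : Type} [Finite X] (B : Subalgebra K (X → K))
    (h : ∀ x y : X, x ≠ y → ∃ f ∈ B, f x ≠ f y) : B = ⊤ := by
  classical
  haveI := Fintype.ofFinite X
  have key : ∀ x y : X, ∃ f ∈ B, f x = 1 ∧ (x ≠ y → f y = 0) := by
    intro x y
    by_cases hxy : x = y
    · exact ⟨1, B.one_mem, rfl, fun hh => absurd hxy hh⟩
    · obtain ⟨f, hf, hne⟩ := h x y hxy
      refine ⟨(f x - f y)⁻¹ • (f - algebraMap K (X → K) (f y)),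
        B.smul_mem (B.sub_mem hf (B.algebraMap_mem _)) _, ?_, fun _ => ?_⟩
      · simp [inv_mul_cancel₀ (sub_ne_zero.mpr hne)]
      · simp
  choose F hFB hF1 hF0 using key
  have hind : ∀ x : X, (∏ y, F x y) ∈ B := fun x => B.prod_mem fun y _ => hFB x y
  rw [eq_top_iff]
  intro g _
  have : g = ∑ x, g x • ∏ y, F x y := by
    funext z
    rw [Finset.sum_apply, Finset.sum_eq_single z]
    · simp [Finset.prod_apply, hF1]
    · intro x _ hxz
      rw [Pi.smul_apply, Finset.prod_apply,
        Finset.prod_eq_zero (f := fun c => F x c z) (i := z) (Finset.mem_univ z) (hF0 x z hxz), smul_zero]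
    · simp
  rw [this]
  exact B.sum_mem fun x _ => B.smul_mem (hind x) _

lemma point_ne (G : Multigraph V E) (v : V → Kˣ) (e : E) : G.point K v e ≠ 0 := by
  simp [point]

lemma pow_card_sub (x : K) (hx : x ≠ 0) : x ^ (Fintype.card K - 2) = x⁻¹ := by
  have h1 := FiniteField.pow_card_sub_one_eq_one x hx
  have h2 : 1 < Fintype.card K := Fintype.one_lt_card
  refine eq_inv_of_mul_eq_one_left ?_
  rw [← pow_succ]
  rw [show Fintype.card K - 2 + 1 = Fintype.card K - 1 by omega, h1]

lemma hilbert_eq (G : Multigraph V E) (e0 : E) (d : ℕ)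
    (h : ∀ a : E → ℕ, (∑ e, a e) ≡ d [MOD Fintype.card K - 1] →
      ∃ a' : E → ℕ, ∑ e, a' e = d ∧
        ∀ v : V → Kˣ, ∏ e, G.point K v e ^ a e = ∏ e, G.point K v e ^ a' e) :
    G.hilbert K d = (G.toricSet K).ncard := by
  classical
  have hfin : (G.toricSet K).Finite := Set.finite_range _
  haveI : Finite (G.toricSet K) := hfin
  haveI : Fintype (G.toricSet K) := Fintype.ofFinite _
  have hcard : 1 < Fintype.card K := Fintype.one_lt_card
  set X := ↥(G.toricSet K)
  have hrep : ∀ x : X, ∃ v : V → Kˣ, MulAction.orbit Kˣ (G.point K v) = x.1 := fun x => x.2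
  choose v hv using hrep
  let p : X → E → K := fun x => G.point K (v x)
  have hp : ∀ x e, p x e ≠ 0 := fun x e => point_ne K G _ e
  let ev : MvPolynomial E K →ₗ[K] (X → K) :=
    LinearMap.pi fun x => (MvPolynomial.aeval (p x)).toLinearMap
  have hev : ∀ f x, ev f x = eval (p x) f := by
    intro f x
    simp [ev, MvPolynomial.aeval_eq_eval]
  let H := homogeneousSubmodule E K d
  let L1 := (Ideal.Quotient.mkₐ K (G.vanishingIdeal K)).toLinearMap.domRestrict H
  let L2 := ev.domRestrict H
  -- the monomials
  have hmon : ∀ a : E → ℕ, (∑ e, a e) ≡ d [MOD Fintype.card K - 1] →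
      (fun x => ∏ e, p x e ^ a e) ∈ LinearMap.range L2 := by
    intro a ha
    obtain ⟨a', hd, ha'⟩ := h a ha
    have hom : (∏ e, (MvPolynomial.X e : MvPolynomial E K) ^ a' e).IsHomogeneous d := by
      rw [← hd]
      exact IsHomogeneous.prod _ _ _ fun e _ => isHomogeneous_X_pow e (a' e)
    refine ⟨⟨_, (mem_homogeneousSubmodule _ _).mpr hom⟩, ?_⟩
    funext x
    change ev (∏ e, (MvPolynomial.X e : MvPolynomial E K) ^ a' e) x = _
    rw [hev]
    rw [map_prod]
    simp only [map_pow, eval_X]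
    exact (ha' (v x)).symm
  let M : Submonoid (X → K) :=
    { carrier := {f | ∃ a : E → ℕ, Fintype.card K - 1 ∣ ∑ e, a e ∧ f = fun x => ∏ e, p x e ^ a e}
      one_mem' := ⟨0, by simp, by funext x; simp⟩
      mul_mem' := by
        rintro f g ⟨a, ha, rfl⟩ ⟨b, hb, rfl⟩
        refine ⟨a + b, ?_, ?_⟩
        · simp only [Pi.add_apply, Finset.sum_add_distrib]
          exact dvd_add ha hb
        · funext x
          simp [pow_add, Finset.prod_mul_distrib] }
  have hM : Algebra.adjoin K (M : Set (X → K)) = ⊤ := by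
    apply subalgebra_eq_top
    intro x y hxy
    by_contra hcon
    push Not at hcon
    apply hxy
    have hall : ∀ e, p x e * (p x e0)⁻¹ = p y e * (p y e0)⁻¹ := by
      intro e
      have hmem : (fun z => p z e * (p z e0)⁻¹) ∈ M := by
        refine ⟨Pi.single e 1 + Pi.single e0 (Fintype.card K - 2), ?_, ?_⟩
        · simp only [Pi.add_apply, Finset.sum_add_distrib, Finset.sum_pi_single']
          simp only [Finset.mem_univ, if_true, Finset.sum_pi_single, Fintype.sum_pi_single']
          rw [show 1 + (Fintype.card K - 2) = Fintype.card K - 1 by omega]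
        · funext z
          simp only [Pi.add_apply, pow_add, Finset.prod_mul_distrib]
          congr 1
          · rw [Finset.prod_eq_single e] <;> simp +contextual
          · rw [Finset.prod_eq_single e0]
            · simp [pow_card_sub K _ (hp z e0)]
            · simp +contextual
            · simp
      exact hcon _ (Algebra.subset_adjoin hmem)
    apply Subtype.ext
    rw [← hv x, ← hv y, MulAction.orbit_eq_iff]
    refine ⟨Units.mk0 (p x e0) (hp x e0) * (Units.mk0 (p y e0) (hp y e0))⁻¹, ?_⟩
    funext e
    have := hall e
    change ((Units.mk0 (p x e0) (hp x e0) * (Units.mk0 (p y e0) (hp y e0))⁻¹ : Kˣ) : K) * p y e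
      = p x e
    have h1 := hp x e0
    have h2 := hp y e0
    simp only [Units.val_mul, Units.val_mk0, Units.val_inv_eq_inv_val]
    rw [mul_assoc, mul_comm _ (p y e), ← this]
    field_simp
  have hsurj : LinearMap.range L2 = ⊤ := by
    rw [eq_top_iff]
    intro g _
    have hg : (fun x => g x * ((p x e0) ^ d)⁻¹) ∈ Submodule.span K (M : Set (X → K)) := by
      have : (fun x => g x * ((p x e0) ^ d)⁻¹) ∈ Algebra.adjoin K (M : Set (X → K)) := by
        rw [hM]; trivial
      rw [← Subalgebra.mem_toSubmodule, Algebra.adjoin_eq_span, Submonoid.closure_eq] at this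
      exact this
    have key : ∀ f ∈ Submodule.span K (M : Set (X → K)),
        (fun x => f x * (p x e0) ^ d) ∈ LinearMap.range L2 := by
      intro f hf
      induction hf using Submodule.span_induction with
      | mem f hf =>
        obtain ⟨a, ha, rfl⟩ := hf
        have := hmon (a + Pi.single e0 d) (by
          simp only [Pi.add_apply, Finset.sum_add_distrib, Fintype.sum_pi_single']
          simpa using (Nat.modEq_zero_iff_dvd.mpr ha).add_right d)
        convert this using 2 with x
        simp only [Pi.add_apply, pow_add, Finset.prod_mul_distrib]
        congr 1
        rw [Finset.prod_eq_single e0] <;> simp +contextual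
      | zero => convert Submodule.zero_mem _ using 1; funext x; simp
      | add f g _ _ hf hg =>
        convert Submodule.add_mem _ hf hg using 1; funext x; simp [add_mul]
      | smul c f _ hf =>
        convert Submodule.smul_mem _ c hf using 1; funext x; simp [mul_assoc]
    have := key _ hg
    convert this using 1
    funext x
    have := hp x e0
    field_simp
  have hker : LinearMap.ker L1 = LinearMap.ker L2 := by
    ext ⟨f, hf⟩
    have hf' : f.IsHomogeneous d := (mem_homogeneousSubmodule _ _).mp hf
    rw [LinearMap.mem_ker, LinearMap.mem_ker]
    change Ideal.Quotient.mk (G.vanishingIdeal K) f = 0 ↔ ev f = 0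
    rw [Ideal.Quotient.eq_zero_iff_mem]
    change (∀ (x : V → Kˣ) (d : ℕ), eval (G.point K x) (homogeneousComponent d f) = 0) ↔ _
    constructor
    · intro hz
      funext x
      rw [hev]
      have := hz (v x) d
      rwa [homogeneousComponent_of_mem hf, if_pos rfl] at this
    · intro hz w j
      rw [homogeneousComponent_of_mem hf]
      split_ifs with hj
      · let x : X := ⟨MulAction.orbit Kˣ (G.point K w), w, rfl⟩
        have h1 : MulAction.orbit Kˣ (G.point K (v x)) = MulAction.orbit Kˣ (G.point K w) := hv x
        have h2 : G.point K w ∈ MulAction.orbit Kˣ (G.point K (v x)) := by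
          rw [h1]; exact MulAction.mem_orbit_self _
        obtain ⟨c, hc⟩ := h2
        have h3 : G.point K w = (c : K) • p x := hc.symm
        have h4 : eval (p x) f = 0 := by rw [← hev, hz]; rfl
        rw [h3]
        have h6 : eval ((c : K) • p x) f = (c : K) ^ d * eval (p x) f := by
          rw [eval_eq, eval_eq, Finset.mul_sum]
          refine Finset.sum_congr rfl fun b hb => ?_
          have hdeg : ∑ e ∈ b.support, b e = d := by
            have := hf' (mem_support_iff.mp hb)
            rw [Finsupp.weight_apply, Finsupp.sum] at this
            simpa using this
          simp only [Pi.smul_apply, smul_eq_mul, mul_pow, Finset.prod_mul_distrib,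
            Finset.prod_pow_eq_pow_sum, hdeg]
          ring
        rw [h6, h4, mul_zero]
      · simp
  unfold hilbert
  rw [← LinearMap.range_domRestrict]
  change Module.finrank K (LinearMap.range L1) = _
  rw [← L1.quotKerEquivRange.finrank_eq, (Submodule.quotEquivOfEq _ _ hker).finrank_eq,
    L2.quotKerEquivRange.finrank_eq, hsurj, finrank_top, Module.finrank_fintype_fun_eq_card,
    ← Nat.card_eq_fintype_card]
  rfl

end General

section Comb

variable {n : ℕ} [NeZero n]

/-- Sum of residues of one path after the shift by `c`. -/
def S (n k : ℕ) [NeZero n] (a : ℕ → ZMod n) (c : ZMod n) : ℕ :=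
  ∑ j ∈ Finset.range k, (a j + (-1) ^ j * c).val

lemma two_mul_sum_val : 2 * ∑ c : ZMod n, c.val = n * (n - 1) := by
  obtain ⟨m, rfl⟩ : ∃ m, n = m + 1 := ⟨n - 1, by have := NeZero.pos n; omega⟩
  have : ∑ c : ZMod (m + 1), c.val = ∑ i ∈ Finset.range (m + 1), i :=
    Fin.sum_univ_eq_sum_range (fun i => i) (m + 1)
  rw [this, mul_comm, Finset.sum_range_id_mul_two]

lemma sum_S (k : ℕ) (a : ℕ → ZMod n) : 2 * ∑ c, S n k a c = k * (n * (n - 1)) := by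
  unfold S
  rw [Finset.sum_comm]
  have : ∀ j ∈ Finset.range k, ∑ c : ZMod n, (a j + (-1) ^ j * c).val = ∑ c : ZMod n, c.val := by
    intro j _
    rcases neg_one_pow_eq_or (ZMod n) j with h | h
    · simp only [h, one_mul]
      exact Equiv.sum_comp (Equiv.addLeft (a j)) ZMod.val
    · simp only [h, neg_one_mul, ← sub_eq_add_neg]
      exact Equiv.sum_comp (Equiv.subLeft (a j)) ZMod.val
  rw [Finset.sum_congr rfl this, Finset.sum_const, Finset.card_range, smul_eq_mul,
    ← two_mul_sum_val (n := n)]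
  ring

lemma sum_sign {k : ℕ} (hk : Odd k) : ∑ j ∈ Finset.range k, ((-1 : ZMod n)) ^ j = 1 := by
  obtain ⟨m, rfl⟩ := hk
  induction m with
  | zero => simp
  | succ m ih =>
    rw [show 2 * (m + 1) + 1 = (2 * m + 1) + 1 + 1 by ring, Finset.sum_range_succ,
      Finset.sum_range_succ, ih]
    ring

lemma S_cast {k : ℕ} (hk : Odd k) (a : ℕ → ZMod n) (c : ZMod n) :
    (S n k a c : ZMod n) = ∑ j ∈ Finset.range k, a j + c := by
  unfold S
  push_cast
  simp only [ZMod.natCast_val, ZMod.cast_id', id, Finset.sum_add_distrib, ← Finset.sum_mul]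
  rw [sum_sign hk, one_mul]

lemma exists_min {k : ℕ} (hk : Odd k) (a : ℕ → ZMod n) :
    ∃ c, S n k a c ≤ k / 2 * (n - 1) := by
  by_contra hcon
  push Not at hcon
  set B := k / 2 * (n - 1) + 1 with hB
  have hge : ∀ c, B ≤ S n k a c := fun c => hcon c
  have hle : ∑ c : ZMod n, c.val ≤ ∑ c, (S n k a c - B) := by
    rw [← Equiv.sum_comp (Equiv.addLeft (∑ j ∈ Finset.range k, a j - (B : ZMod n))) ZMod.val]
    refine Finset.sum_le_sum fun c _ => ?_
    have : ((S n k a c - B : ℕ) : ZMod n) = ∑ j ∈ Finset.range k, a j - (B : ZMod n) + c := by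
      rw [Nat.cast_sub (hge c), S_cast hk]; ring
    change (∑ j ∈ Finset.range k, a j - (B : ZMod n) + c).val ≤ _
    rw [← this, ZMod.val_natCast]
    exact Nat.mod_le _ _
  have hsum : ∑ c, (S n k a c - B) + n * B = ∑ c, S n k a c := by
    have : n * B = ∑ _c : ZMod n, B := by simp [ZMod.card]
    rw [this, ← Finset.sum_add_distrib]
    exact Finset.sum_congr rfl fun c _ => Nat.sub_add_cancel (hge c)
  have h1 := sum_S k a
  have h2 := two_mul_sum_val (n := n)
  obtain ⟨m, rfl⟩ := hk
  have hm : (2 * m + 1) / 2 = m := by omega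
  rw [hm] at hB
  have hn := NeZero.pos n
  have h3 : (2 * m + 1) * (n * (n - 1)) = 2 * (n * (m * (n - 1))) + n * (n - 1) := by ring
  have h4 : n * B = n * (m * (n - 1)) + n := by rw [hB]; ring
  omega

lemma exists_pair {k l : ℕ} (hk : Odd k) (hl : Odd l) (a b : ℕ → ZMod n) (s : ZMod n) :
    ∃ c, S n k a c + S n l b (s - c) ≤ (k / 2 + l / 2 + 1) * (n - 1) := by
  by_contra hcon
  push Not at hcon
  have h1 := sum_S k a
  have h2 := sum_S l b
  rw [← Equiv.sum_comp (Equiv.subLeft s)] at h2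
  have h3 : ∑ _c : ZMod n, (k / 2 + l / 2 + 1) * (n - 1)
      < ∑ c, (S n k a c + S n l b (s - c)) :=
    Finset.sum_lt_sum_of_nonempty Finset.univ_nonempty fun c _ => hcon c
  rw [Finset.sum_add_distrib] at h3
  simp only [Finset.sum_const, Finset.card_univ, ZMod.card, smul_eq_mul] at h3
  simp only [Equiv.subLeft_apply] at h2
  obtain ⟨m, rfl⟩ := hk
  obtain ⟨m', rfl⟩ := hl
  have hm : (2 * m + 1) / 2 = m := by omega
  have hm' : (2 * m' + 1) / 2 = m' := by omega
  rw [hm, hm'] at h3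
  nlinarith

lemma exists_shift {r : ℕ} (hr : 2 ≤ r) (k : Fin r → ℕ) (hodd : ∀ i, Odd (k i))
    (a : Fin r → ℕ → ZMod n) :
    ∃ c : Fin r → ZMod n, ∑ i, c i = 0 ∧
      ∑ i, S n (k i) (a i) (c i) ≤ (∑ i, k i / 2) * (n - 1) + (n - 1) := by
  obtain ⟨r, rfl⟩ : ∃ r', r = r' + 2 := ⟨r - 2, by omega⟩
  choose c0 hc0 using fun i => exists_min (hodd i) (a i)
  obtain ⟨c, hc⟩ := exists_pair (hodd 0) (hodd 1) (a 0) (a 1)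
    (-∑ i : Fin r, c0 i.succ.succ)
  refine ⟨Fin.cons c (Fin.cons (-∑ i : Fin r, c0 i.succ.succ - c) fun i => c0 i.succ.succ),
    ?_, ?_⟩
  · simp only [Fin.sum_univ_succ, Fin.cons_zero, Fin.cons_succ]
    ring
  · have h : ∑ i : Fin r, S n (k i.succ.succ) (a i.succ.succ) (c0 i.succ.succ)
        ≤ (∑ i : Fin r, k i.succ.succ / 2) * (n - 1) := by
      rw [Finset.sum_mul]
      exact Finset.sum_le_sum fun i _ => hc0 _
    rw [Fin.sum_univ_succ, Fin.sum_univ_succ, Fin.sum_univ_succ, Fin.sum_univ_succ]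
    simp only [Fin.cons_zero, Fin.cons_succ]
    rw [Fin.succ_zero_eq_one]
    nlinarith

end Comb

section Pow

variable {n : ℕ} [NeZero n] {A : Type} [CommGroup A]

lemma pow_val_natCast (hA : ∀ x : A, x ^ n = 1) (x : A) (m : ℕ) :
    x ^ (m : ZMod n).val = x ^ m := by
  rw [ZMod.val_natCast]
  exact (pow_eq_pow_mod m (hA x)).symm

lemma pow_val_add (hA : ∀ x : A, x ^ n = 1) (x : A) (y z : ZMod n) :
    x ^ (y + z).val = x ^ y.val * x ^ z.val := by
  rw [ZMod.val_add, ← pow_eq_pow_mod _ (hA x), pow_add]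

lemma pow_val_neg (hA : ∀ x : A, x ^ n = 1) (x : A) (y : ZMod n) :
    x ^ y.val * x ^ (-y).val = 1 := by
  rw [← pow_val_add hA, add_neg_cancel, ZMod.val_zero, pow_zero]

lemma pow_val_sum (hA : ∀ x : A, x ^ n = 1) (x : A) {ι : Type} (s : Finset ι) (c : ι → ZMod n) :
    ∏ i ∈ s, x ^ (c i).val = x ^ (∑ i ∈ s, c i).val := by
  classical
  induction s using Finset.induction_on with
  | empty => simp
  | insert i s hi ih => rw [Finset.prod_insert hi, Finset.sum_insert hi, pow_val_add hA, ih]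

lemma telescope (hA : ∀ x : A, x ^ n = 1) (w : ℕ → A) (c : ZMod n) (k : ℕ) :
    ∏ j ∈ Finset.range k, (w j * w (j + 1)) ^ ((-1) ^ j * c).val
      = w 0 ^ c.val * w k ^ (-((-1) ^ k * c)).val := by
  induction k with
  | zero => simp [pow_val_neg hA]
  | succ k ih =>
    rw [Finset.prod_range_succ, ih, mul_pow]
    have h := pow_val_neg hA (w k) ((-1) ^ k * c)
    have e : -((-1) ^ (k + 1) * c) = (-1) ^ k * c := by ring
    rw [e]
    calc _ = w 0 ^ c.val * (w k ^ ((-1) ^ k * c).val * w k ^ (-((-1) ^ k * c)).val)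
          * w (k + 1) ^ ((-1) ^ k * c).val := by
          simp only [mul_assoc, mul_left_comm, mul_comm]
      _ = _ := by rw [h, mul_one]

end Pow

lemma exists_exponent (K : Type) [Field K] [Fintype K] (r : ℕ) (hr : 2 ≤ r)
    (k : Fin r → ℕ) (hk : ∀ i, 0 < k i) (hodd : ∀ i, Odd (k i))
    (a : ((i : Fin r) × Fin (k i)) → ℕ)
    (ha : (∑ e, a e) ≡ (∑ i, k i / 2) * (Fintype.card K - 2) [MOD Fintype.card K - 1]) :
    ∃ a' : ((i : Fin r) × Fin (k i)) → ℕ, ∑ e, a' e = (∑ i, k i / 2) * (Fintype.card K - 2) ∧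
      ∀ v, ∏ e, (parallelComp k).point K v e ^ a e
        = ∏ e, (parallelComp k).point K v e ^ a' e := by
  classical
  have hcard : 1 < Fintype.card K := Fintype.one_lt_card
  obtain ⟨n, hn⟩ : ∃ n, n = Fintype.card K - 1 := ⟨_, rfl⟩
  haveI : NeZero n := ⟨by omega⟩
  rw [← hn] at ha
  rw [show Fintype.card K - 2 = n - 1 by omega] at ha ⊢
  have hA : ∀ x : Kˣ, x ^ n = 1 := by
    intro x
    rw [hn]
    ext
    rw [Units.val_pow_eq_pow_val, FiniteField.pow_card_sub_one_eq_one _ x.ne_zero, Units.val_one]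
  let b : Fin r → ℕ → ZMod n := fun i j => if h : j < k i then (a ⟨i, ⟨j, h⟩⟩ : ZMod n) else 0
  have hb : ∀ i (j : Fin (k i)), b i j = (a ⟨i, j⟩ : ZMod n) := by
    intro i j
    simp [b]
  obtain ⟨c, hc0, hc⟩ := exists_shift hr k hodd b
  let a1 : ((i : Fin r) × Fin (k i)) → ℕ := fun e => (b e.1 e.2 + (-1) ^ (e.2 : ℕ) * c e.1).val
  have hsum : ∑ e, a1 e = ∑ i, S n (k i) (b i) (c i) := by
    rw [Fintype.sum_sigma]
    refine Finset.sum_congr rfl fun i _ => ?_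
    exact Fin.sum_univ_eq_sum_range (fun j => (b i j + (-1) ^ j * c i).val) (k i)
  have hmod : (∑ e, a1 e) ≡ (∑ i, k i / 2) * (n - 1) [MOD n] := by
    refine Nat.ModEq.trans ?_ ha
    rw [← ZMod.natCast_eq_natCast_iff, hsum]
    push_cast
    simp only [S_cast (hodd _), Finset.sum_add_distrib, hc0, add_zero]
    rw [Fintype.sum_sigma]
    refine Finset.sum_congr rfl fun i _ => ?_
    rw [← Fin.sum_univ_eq_sum_range]
    exact Finset.sum_congr rfl fun j _ => hb i j
  have hle : ∑ e, a1 e ≤ (∑ i, k i / 2) * (n - 1) := by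
    by_contra hlt
    push Not at hlt
    have hd := (Nat.modEq_iff_dvd' hlt.le).mp hmod.symm
    have := Nat.le_of_dvd (by omega) hd
    have := NeZero.pos n
    omega
  obtain ⟨t, ht⟩ := (Nat.modEq_iff_dvd' hle).mp hmod
  let e0 : (i : Fin r) × Fin (k i) := ⟨⟨0, by omega⟩, ⟨0, hk _⟩⟩
  refine ⟨a1 + Pi.single e0 (n * t), ?_, ?_⟩
  · simp only [Pi.add_apply, Finset.sum_add_distrib]
    rw [Finset.sum_pi_single']
    simp only [Finset.mem_univ, if_true]
    omega
  · intro v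
    let y : ((i : Fin r) × Fin (k i)) → Kˣ :=
      fun e => v ((parallelComp k).fst e) * v ((parallelComp k).snd e)
    have hy : ∀ e, (parallelComp k).point K v e = (y e : K) := by
      intro e; simp [y, point]
    simp only [hy]
    suffices h : ∏ e, y e ^ a e = ∏ e, y e ^ (a1 + (Pi.single e0 (n * t) : _ → ℕ)) e by
      have := congrArg (Units.val) h
      simpa using this
    have hextra : ∏ e, y e ^ (Pi.single e0 (n * t) : _ → ℕ) e = 1 := by
      refine Finset.prod_eq_one fun e _ => ?_
      by_cases he : e = e0
      · subst he
        rw [Pi.single_eq_same, pow_mul, hA, one_pow]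
      · rw [Pi.single_eq_of_ne he, pow_zero]
    have hshift : ∏ e, y e ^ ((-1) ^ (e.2 : ℕ) * c e.1).val = 1 := by
      rw [Fintype.prod_sigma]
      have : ∀ i, ∏ j : Fin (k i), y ⟨i, j⟩ ^ ((-1) ^ (j : ℕ) * c i).val
          = (v (Sum.inl false) * v (Sum.inl true)) ^ (c i).val := by
        intro i
        have h1 := telescope hA (fun j => v (pcVert k i j)) (c i) (k i)
        rw [← Fin.prod_univ_eq_prod_range
          (fun j => (v (pcVert k i j) * v (pcVert k i (j + 1))) ^ ((-1) ^ j * c i).val)] at h1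
        refine Eq.trans h1 ?_
        have h2 : pcVert k i 0 = Sum.inl false := by simp [pcVert]
        have h3 : pcVert k i (k i) = Sum.inl true := by
          have := hk i
          simp [pcVert, this.ne']
        rw [h2, h3, (hodd i).neg_one_pow, mul_pow]
        simp
      simp only [this]
      rw [pow_val_sum hA, hc0, ZMod.val_zero, pow_zero]
    have h1 : ∏ e, y e ^ a1 e = ∏ e, y e ^ a e := by
      simp only [a1, pow_val_add hA, Finset.prod_mul_distrib]
      rw [hshift, mul_one]
      refine Finset.prod_congr rfl fun e _ => ?_
      rw [hb, pow_val_natCast hA]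
    simp only [Pi.add_apply, pow_add, Finset.prod_mul_distrib]
    rw [hextra, mul_one, h1]

end PCProof

/-- **Theorem 3.3.**  Let `G` be the parallel composition of `r ≥ 2` paths of odd
lengths `k 0, ..., k (r-1)`.  Then `reg G ≤ (⌊k 0/2⌋ + ... + ⌊k (r-1)/2⌋)(q-2)`,
where `q = |K|`. -/
theorem reg_parallelComp_odd_upper_bound
    (K : Type) [Field K] [Fintype K] (r : ℕ) (hr : 2 ≤ r)
    (k : Fin r → ℕ) (hk : ∀ i, 0 < k i) (hodd : ∀ i, Odd (k i)) :
    (parallelComp k).reg K ≤ (∑ i, k i / 2) * (Fintype.card K - 2) := by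
  
  refine Nat.sInf_le ?_
  exact PCProof.hilbert_eq K (parallelComp k) ⟨⟨0, by omega⟩, ⟨0, hk _⟩⟩ _
    (PCProof.exists_exponent K r hr k hk hodd)
end

section
/- Let G be the parallel composition of r ≥ 2 paths whose lengths have mixed parities (at least one path of odd length and at least one path of even length), let H_1 be the parallel composition of the paths of odd length, and let H_2 be the parallel composition of the paths of even length. Then reg(G) ≤ reg(H_1) + reg(H_2) + (q−2). -/
open MvPolynomial

/-- A homogeneous form of degree `q - 2` that separates equal from different values of the
coordinates `a` and `b` on the torus. -/
noncomputable def linkPoly {E : Type} (K : Type) [Field K] [Fintype K] (a b : E) :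
    MvPolynomial E K :=
  ∑ i ∈ Finset.range (Fintype.card K - 1), X a ^ i * X b ^ (Fintype.card K - 1 - 1 - i)

lemma linkPoly_isHomogeneous {E : Type} (K : Type) [Field K] [Fintype K] (a b : E) :
    (linkPoly K a b).IsHomogeneous (Fintype.card K - 2) := by
  refine IsHomogeneous.sum _ _ _ fun i hi => ?_
  have h := (isHomogeneous_X_pow (R := K) a i).mul
    (isHomogeneous_X_pow (R := K) b (Fintype.card K - 1 - 1 - i))
  have hi' := Finset.mem_range.mp hi
  have e : i + (Fintype.card K - 1 - 1 - i) = Fintype.card K - 2 := by omega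
  rwa [e] at h

lemma linkPoly_eval_one {E : Type} (K : Type) [Field K] [Fintype K] (a b : E) :
    eval (fun _ => (1 : K)) (linkPoly K a b) ≠ 0 := by
  have h1 : 1 ≤ Fintype.card K := Fintype.card_pos
  simp [linkPoly, Nat.cast_sub h1]

lemma linkPoly_eval_ne {E : Type} (K : Type) [Field K] [Fintype K] (a b : E) (p : E → K)
    (ha : p a ≠ 0) (hb : p b ≠ 0) (h : eval p (linkPoly K a b) ≠ 0) : p a = p b := by
  by_contra hne
  apply h
  have h2 := (Commute.all (p a) (p b)).geom_sum₂_mul (Fintype.card K - 1)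
  rw [FiniteField.pow_card_sub_one_eq_one _ ha, FiniteField.pow_card_sub_one_eq_one _ hb,
    sub_self, mul_eq_zero] at h2
  rcases h2 with h2 | h2
  · simpa [linkPoly] using h2
  · exact absurd (sub_eq_zero.mp h2) hne

namespace Multigraph

variable {V E : Type} (K : Type) [Field K] [Fintype K]

/-- `f` is a form of degree `d` not vanishing at the identity of `X` and vanishing at
every other point of `X`. -/
def IsPeak (G : Multigraph V E) (d : ℕ) (f : MvPolynomial E K) : Prop :=
  f.IsHomogeneous d ∧ eval (fun _ => (1 : K)) f ≠ 0 ∧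
    ∀ x : V → Kˣ, eval (G.point K x) f ≠ 0 → ∃ c : K, ∀ e, G.point K x e = c

lemma point_ne_zero (G : Multigraph V E) (x : V → Kˣ) (e : E) : G.point K x e ≠ 0 := by
  simp [point]

lemma eval_smul_point {d : ℕ} {f : MvPolynomial E K} (hf : f.IsHomogeneous d) (c : K)
    (p : E → K) : eval (fun e => c * p e) f = c ^ d * eval p f := by
  rw [eval_eq, eval_eq, Finset.mul_sum]
  refine Finset.sum_congr rfl fun m hm => ?_
  have hd := hf.degree_eq_sum_deg_support hm
  simp only [mul_pow, Finset.prod_mul_distrib, Finset.prod_pow_eq_pow_sum]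
  have : ∑ i ∈ m.support, m i = d := by
    rw [hd]
  rw [this]; ring

/-- Evaluation at chosen representatives of the projective points. -/
noncomputable def evalMap (G : Multigraph V E) :
    MvPolynomial E K →ₗ[K] (G.toricSet K → K) :=
  LinearMap.pi fun P => (aeval (R := K) (G.point K (P.2.choose))).toLinearMap

lemma evalMap_apply (G : Multigraph V E) (f : MvPolynomial E K) (P : G.toricSet K) :
    G.evalMap K f P = eval (G.point K (P.2.choose)) f := by
  simp [evalMap, aeval_eq_eval]

lemma exists_rep (G : Multigraph V E) (x : V → Kˣ) :
    ∃ (P : G.toricSet K) (c : Kˣ), P.1 = MulAction.orbit Kˣ (G.point K x) ∧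
      G.point K x = fun e => (c : K) * G.point K (P.2.choose) e := by
  refine ⟨⟨MulAction.orbit Kˣ (G.point K x), x, rfl⟩, ?_⟩
  set P : G.toricSet K := ⟨MulAction.orbit Kˣ (G.point K x), x, rfl⟩
  have hs : MulAction.orbit Kˣ (G.point K P.2.choose) = MulAction.orbit Kˣ (G.point K x) :=
    P.2.choose_spec
  have hm : G.point K x ∈ MulAction.orbit Kˣ (G.point K P.2.choose) := by
    rw [hs]; exact MulAction.mem_orbit_self _
  obtain ⟨c, hc⟩ := hm
  refine ⟨c, rfl, ?_⟩
  rw [← hc]; rfl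

lemma mem_vanishing_iff (G : Multigraph V E) {d : ℕ} {f : MvPolynomial E K}
    (hf : f.IsHomogeneous d) : f ∈ G.vanishingIdeal K ↔ G.evalMap K f = 0 := by
  have h0 : f ∈ G.vanishingIdeal K ↔
      ∀ (x : V → Kˣ) (d : ℕ), eval (G.point K x) (homogeneousComponent d f) = 0 := Iff.rfl
  rw [h0]
  constructor
  · intro h
    ext P
    rw [evalMap_apply]
    have := h P.2.choose d
    rwa [homogeneousComponent_eq_self hf] at this
  · intro h x n
    rw [homogeneousComponent_of_mem ((mem_homogeneousSubmodule _ _).mpr hf)]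
    split_ifs
    · obtain ⟨P, c, -, hc⟩ := G.exists_rep K x
      rw [hc, eval_smul_point K hf, ← evalMap_apply, h]
      simp
    · simp

lemma hilbert_eq (G : Multigraph V E) (d : ℕ) :
    G.hilbert K d = Module.finrank K ((homogeneousSubmodule E K d).map (G.evalMap K)) := by
  unfold hilbert
  rw [← LinearMap.range_domRestrict, ← LinearMap.range_domRestrict]
  have hker : LinearMap.ker ((Ideal.Quotient.mkₐ K (G.vanishingIdeal K)).toLinearMap.domRestrict
      (homogeneousSubmodule E K d)) =
      LinearMap.ker ((G.evalMap K).domRestrict (homogeneousSubmodule E K d)) := by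
    ext ⟨f, hf⟩
    simp only [LinearMap.mem_ker, LinearMap.domRestrict_apply, AlgHom.toLinearMap_apply,
      Ideal.Quotient.mkₐ_eq_mk, Ideal.Quotient.eq_zero_iff_mem]
    exact G.mem_vanishing_iff K hf
  exact (((LinearMap.quotKerEquivRange _).symm.trans (Submodule.quotEquivOfEq _ _ hker)).trans
    (LinearMap.quotKerEquivRange _)).finrank_eq

lemma hilbert_eq_card_iff [Finite V] (G : Multigraph V E) (d : ℕ) :
    G.hilbert K d = (G.toricSet K).ncard ↔
      (homogeneousSubmodule E K d).map (G.evalMap K) = ⊤ := by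
  have : Finite (G.toricSet K) := Set.finite_range _
  have := Fintype.ofFinite (G.toricSet K)
  have hc : (G.toricSet K).ncard = Module.finrank K (G.toricSet K → K) := by
    rw [Module.finrank_fintype_fun_eq_card, ← Nat.card_eq_fintype_card]
    rfl
  rw [hilbert_eq, hc]
  constructor
  · exact Submodule.eq_top_of_finrank_eq
  · intro h
    rw [h, finrank_top]

lemma point_mul_inv (G : Multigraph V E) (x y : V → Kˣ) :
    G.point K (x * y⁻¹) = fun e => (G.point K y e)⁻¹ * G.point K x e := by
  ext e
  simp [point]
  ring

lemma hilbert_iff_peak [Finite V] (G : Multigraph V E) (d : ℕ) :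
    G.hilbert K d = (G.toricSet K).ncard ↔ ∃ f, G.IsPeak K d f := by
  classical
  have hfin : Finite (G.toricSet K) := Set.finite_range _
  have := Fintype.ofFinite (G.toricSet K)
  rw [hilbert_eq_card_iff]
  have h1 : G.point K 1 = fun _ => (1 : K) := by ext e; simp [point]
  constructor
  · intro h
    obtain ⟨P, c, hP, hc⟩ := G.exists_rep K 1
    have hm : (Pi.single P 1 : G.toricSet K → K) ∈
        (homogeneousSubmodule E K d).map (G.evalMap K) := by rw [h]; trivial
    obtain ⟨f, hf, hfP⟩ := hm
    have hf' : f.IsHomogeneous d := hf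
    refine ⟨f, hf', ?_, ?_⟩
    · rw [← h1, hc, eval_smul_point K hf', ← evalMap_apply, hfP]
      simp
    · intro x hx
      obtain ⟨Q, c', hQ, hc'⟩ := G.exists_rep K x
      rw [hc', eval_smul_point K hf', ← evalMap_apply, hfP] at hx
      have hQP : Q = P := by
        by_contra hne
        exact hx (by simp [Pi.single_eq_of_ne hne])
      subst hQP
      refine ⟨c' * (c : K)⁻¹, fun e => ?_⟩
      have e1 := congrFun hc' e
      have e2 := congrFun (h1.symm.trans hc) e
      simp only at e1 e2
      have hc0 : (c : K) ≠ 0 := c.ne_zero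
      rw [e1]
      field_simp
      rw [mul_comm]
      exact e2.symm
  · rintro ⟨f, hf, hf1, hfx⟩
    rw [eq_top_iff]
    intro v _
    rw [pi_eq_sum_univ v]
    refine Submodule.sum_mem _ fun P _ => Submodule.smul_mem _ _ ?_
    -- translate the peak to `P`
    set y := P.2.choose with hy
    set g : MvPolynomial E K := aeval (fun e => C (G.point K y e)⁻¹ * X e) f with hg
    have hgh : g.IsHomogeneous d := by
      have := hf.aeval (S := K) (fun e => C (G.point K y e)⁻¹ * X e)
        (fun e => isHomogeneous_C_mul_X _ e)
      rwa [one_mul] at this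
    have hge : ∀ p : E → K, eval p g = eval (fun e => (G.point K y e)⁻¹ * p e) f := by
      intro p
      rw [hg, ← aeval_eq_eval, ← aeval_eq_eval]
      simp only [← AlgHom.comp_apply, RingHom.coe_coe]
      congr 1
      ext e
      simp
    have hy1 : eval (G.point K y) g = eval (fun _ => (1 : K)) f := by
      rw [hge]
      congr 2
      ext e
      exact inv_mul_cancel₀ (G.point_ne_zero K y e)
    refine ⟨(eval (fun _ => (1 : K)) f)⁻¹ • g, Submodule.smul_mem _ _ hgh, ?_⟩
    rw [map_smul]
    ext Q
    rw [Pi.smul_apply, evalMap_apply, smul_eq_mul]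
    split_ifs with hPQ
    · subst hPQ
      rw [← hy, hy1, inv_mul_cancel₀ hf1]
    · have hz : eval (G.point K Q.2.choose) g = 0 := by
        by_contra hne
        rw [hge, ← point_mul_inv] at hne
        obtain ⟨c, hc⟩ := hfx _ hne
        apply hPQ
        apply Subtype.ext
        have hP := P.2.choose_spec
        have hQ := Q.2.choose_spec
        simp only at hP hQ
        rw [← hP, ← hQ, eq_comm, MulAction.orbit_eq_iff]
        by_cases hE : Nonempty E
        · obtain ⟨e0⟩ := hE
          have hc0 : c ≠ 0 := by rw [← hc e0]; exact G.point_ne_zero K _ e0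
          refine ⟨Units.mk0 c hc0, ?_⟩
          ext e
          have := hc e
          rw [point_mul_inv] at this
          simp only at this
          change c * G.point K y e = _
          rw [← this]
          have := G.point_ne_zero K y e
          field_simp
        · refine ⟨1, ?_⟩
          ext e
          exact absurd ⟨e⟩ hE
      rw [hz, mul_zero]

lemma exists_peak [Finite E] [Nonempty E] (G : Multigraph V E) : ∃ d f, G.IsPeak K d f := by
  have := Fintype.ofFinite E
  obtain ⟨e0⟩ := ‹Nonempty E›
  refine ⟨_, ∏ e : E, linkPoly K e e0,
    IsHomogeneous.prod _ _ _ fun e _ => linkPoly_isHomogeneous K e e0, ?_, ?_⟩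
  · rw [map_prod]
    exact Finset.prod_ne_zero_iff.mpr fun e _ => linkPoly_eval_one K e e0
  · intro x hx
    rw [map_prod] at hx
    exact ⟨G.point K x e0, fun e => linkPoly_eval_ne K e e0 _ (G.point_ne_zero K x e)
      (G.point_ne_zero K x e0) (Finset.prod_ne_zero_iff.mp hx e (Finset.mem_univ e))⟩

lemma reg_peak [Finite V] [Finite E] [Nonempty E] (G : Multigraph V E) :
    ∃ f, G.IsPeak K (G.reg K) f := by
  rw [← hilbert_iff_peak]
  have hne : {d : ℕ | G.hilbert K d = (G.toricSet K).ncard}.Nonempty := by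
    obtain ⟨d, hd⟩ := G.exists_peak K
    exact ⟨d, (G.hilbert_iff_peak K d).mpr hd⟩
  exact Nat.sInf_mem hne

/-- The general bound for a graph whose edges are covered by two graphs mapping to it. -/
lemma reg_le_of_cover {V₁ E₁ V₂ E₂ : Type} [Finite V] [Finite V₁] [Finite V₂]
    [Finite E₁] [Finite E₂] [Nonempty E₁] [Nonempty E₂]
    (G : Multigraph V E) (H₁ : Multigraph V₁ E₁) (H₂ : Multigraph V₂ E₂)
    (φ₁ : E₁ → E) (φ₂ : E₂ → E) (ψ₁ : V₁ → V) (ψ₂ : V₂ → V)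
    (h₁ : ∀ e, G.fst (φ₁ e) = ψ₁ (H₁.fst e) ∧ G.snd (φ₁ e) = ψ₁ (H₁.snd e))
    (h₂ : ∀ e, G.fst (φ₂ e) = ψ₂ (H₂.fst e) ∧ G.snd (φ₂ e) = ψ₂ (H₂.snd e))
    (hcov : ∀ e, (∃ e', φ₁ e' = e) ∨ (∃ e', φ₂ e' = e)) :
    G.reg K ≤ H₁.reg K + H₂.reg K + (Fintype.card K - 2) := by
  obtain ⟨f₁, hf₁, hf₁', hf₁x⟩ := H₁.reg_peak K
  obtain ⟨f₂, hf₂, hf₂', hf₂x⟩ := H₂.reg_peak K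
  obtain ⟨a⟩ := ‹Nonempty E₁›
  obtain ⟨b⟩ := ‹Nonempty E₂›
  apply Nat.sInf_le
  refine (G.hilbert_iff_peak K _).mpr
    ⟨rename φ₁ f₁ * rename φ₂ f₂ * linkPoly K (φ₁ a) (φ₂ b),
      (hf₁.rename_isHomogeneous.mul hf₂.rename_isHomogeneous).mul
        (linkPoly_isHomogeneous K _ _), ?_, ?_⟩
  · rw [map_mul, map_mul, eval_rename, eval_rename]
    exact mul_ne_zero (mul_ne_zero hf₁' hf₂') (linkPoly_eval_one K _ _)
  · intro x hx
    have p₁ : G.point K x ∘ φ₁ = H₁.point K (x ∘ ψ₁) := by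
      ext e; simp [point, h₁ e]
    have p₂ : G.point K x ∘ φ₂ = H₂.point K (x ∘ ψ₂) := by
      ext e; simp [point, h₂ e]
    rw [map_mul, map_mul, eval_rename, eval_rename, p₁, p₂] at hx
    obtain ⟨c₁, hc₁⟩ := hf₁x _ (left_ne_zero_of_mul (left_ne_zero_of_mul hx))
    obtain ⟨c₂, hc₂⟩ := hf₂x _ (right_ne_zero_of_mul (left_ne_zero_of_mul hx))
    have hl := linkPoly_eval_ne K (φ₁ a) (φ₂ b) _ (G.point_ne_zero K x _)
      (G.point_ne_zero K x _) (right_ne_zero_of_mul hx)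
    rw [← p₁] at hc₁
    rw [← p₂] at hc₂
    simp only [Function.comp_apply] at hc₁ hc₂
    rw [hc₁, hc₂] at hl
    refine ⟨c₁, fun e => ?_⟩
    rcases hcov e with ⟨e', rfl⟩ | ⟨e', rfl⟩
    · exact hc₁ e'
    · rw [hc₂, hl]

end Multigraph

/-- Inclusion of the edges of a sub-family of paths. -/
def pcEdgeIncl {ι : Type} (k : ι → ℕ) (p : ι → Prop)
    (e : (i : {i : ι // p i}) × Fin (k i.1)) : (i : ι) × Fin (k i) := ⟨e.1.1, e.2⟩

/-- Inclusion of the vertices of a sub-family of paths. -/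
def pcVertIncl {ι : Type} (k : ι → ℕ) (p : ι → Prop) :
    Bool ⊕ ((i : {i : ι // p i}) × Fin (k i.1 - 1)) → Bool ⊕ ((i : ι) × Fin (k i - 1)) :=
  Sum.map id fun v => ⟨v.1.1, v.2⟩

lemma pcVertIncl_pcVert {ι : Type} (k : ι → ℕ) (p : ι → Prop) (i : {i : ι // p i}) (j : ℕ) :
    pcVert k i.1 j = pcVertIncl k p (pcVert (fun i : {i : ι // p i} => k i.1) i j) := by
  unfold pcVert pcVertIncl
  split_ifs <;> rfl

/-- **Lemma 3.4.**  Let `G` be the parallel composition of `r ≥ 2` paths whose lengths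
have mixed parities, `H₁` the parallel composition of the paths of odd length and `H₂`
the parallel composition of the paths of even length.  Then
`reg G ≤ reg H₁ + reg H₂ + (q-2)`, where `q = |K|`. -/
theorem reg_parallelComp_mixed_parity_upper_bound
    (K : Type) [Field K] [Fintype K] (r : ℕ) (hr : 2 ≤ r)
    (k : Fin r → ℕ) (hk : ∀ i, 0 < k i)
    (hodd : ∃ i, Odd (k i)) (heven : ∃ i, Even (k i)) :
    (parallelComp k).reg K ≤
      (parallelComp fun i : {i : Fin r // Odd (k i)} => k i.1).reg K +
      (parallelComp fun i : {i : Fin r // Even (k i)} => k i.1).reg K +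
      (Fintype.card K - 2) := by
  obtain ⟨i₁, hi₁⟩ := hodd
  obtain ⟨i₂, hi₂⟩ := heven
  have : Nonempty ((i : {i : Fin r // Odd (k i)}) × Fin (k i.1)) := ⟨⟨⟨i₁, hi₁⟩, ⟨0, hk i₁⟩⟩⟩
  have : Nonempty ((i : {i : Fin r // Even (k i)}) × Fin (k i.1)) := ⟨⟨⟨i₂, hi₂⟩, ⟨0, hk i₂⟩⟩⟩
  refine Multigraph.reg_le_of_cover K _ _ _
    (pcEdgeIncl k fun i => Odd (k i)) (pcEdgeIncl k fun i => Even (k i))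
    (pcVertIncl k _) (pcVertIncl k _)
    (fun e => ⟨pcVertIncl_pcVert k _ e.1 e.2.1, pcVertIncl_pcVert k _ e.1 (e.2.1 + 1)⟩)
    (fun e => ⟨pcVertIncl_pcVert k _ e.1 e.2.1, pcVertIncl_pcVert k _ e.1 (e.2.1 + 1)⟩) ?_
  rintro ⟨i, j⟩
  rcases Nat.even_or_odd (k i) with h | h
  · exact Or.inr ⟨⟨⟨i, h⟩, j⟩, rfl⟩
  · exact Or.inl ⟨⟨⟨i, h⟩, j⟩, rfl⟩
end

section
/- Let G be the parallel composition of r ≥ 2 paths of lengths k_1,...,k_r with edges labeled as follows: setting σ_i = k_1 + ... + k_{i−1} (so σ_1 = 0), the edges of the i-th path P_i, listed consecutively from the common initial vertex, are t_{σ_i+1}, t_{σ_i+2}, ..., t_{σ_i+k_i}. For each i let f_i = t_{σ_i+1}·t_{σ_i+3}···t_{σ_i+2⌈k_i/2⌉−1} (the product of the edges of P_i in odd positions) and g_i = t_{σ_i+2}·t_{σ_i+4}···t_{σ_i+2⌊k_i/2⌋} (the product of the edges of P_i in even positions). If k_i and k_j have the same parity and i ≠ j, then f_i·g_j − f_j·g_i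 ∈ I(X), where X is the projective toric subset parameterized by G. -/
open MvPolynomial

theorem pc_aux_even {K : Type} [Field K] (y : ℕ → K) (a : ℕ) :
    (∏ m ∈ Finset.range a, (y (2 * m) * y (2 * m + 1))) * y (2 * a) =
      y 0 * ∏ m ∈ Finset.range a, (y (2 * m + 1) * y (2 * m + 1 + 1)) := by
  induction a with
  | zero => simp
  | succ a ih =>
    rw [Finset.prod_range_succ, Finset.prod_range_succ, ← mul_assoc (y 0), ← ih,
      show 2 * (a + 1) = 2 * a + 1 + 1 by ring]
    ring

theorem pc_eval_odd {K : Type} [Field K] [Fintype K] {r : ℕ} (k : Fin r → ℕ) (i : Fin r)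
    (x : (Bool ⊕ ((i : Fin r) × Fin (k i - 1))) → Kˣ) :
    eval ((parallelComp k).point K x) (oddProd K k i) =
      ∏ m ∈ Finset.range ((k i + 1) / 2),
        ((x (pcVert k i (2 * m)) : K) * (x (pcVert k i (2 * m + 1)) : K)) := by
  rw [oddProd, map_prod, Finset.prod_range]
  simp [Multigraph.point, parallelComp]

theorem pc_eval_even {K : Type} [Field K] [Fintype K] {r : ℕ} (k : Fin r → ℕ) (i : Fin r)
    (x : (Bool ⊕ ((i : Fin r) × Fin (k i - 1))) → Kˣ) :
    eval ((parallelComp k).point K x) (evenProd K k i) =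
      ∏ m ∈ Finset.range (k i / 2),
        ((x (pcVert k i (2 * m + 1)) : K) * (x (pcVert k i (2 * m + 1 + 1)) : K)) := by
  rw [evenProd, map_prod, Finset.prod_range]
  simp [Multigraph.point, parallelComp]

theorem pc_hom_odd (K : Type) [Field K] {r : ℕ} (k : Fin r → ℕ) (i : Fin r) :
    (oddProd K k i).IsHomogeneous ((k i + 1) / 2) := by
  have h := IsHomogeneous.prod (R := K) (Finset.univ : Finset (Fin ((k i + 1) / 2)))
    (fun m => X (⟨i, ⟨2 * m.1, by have := m.2; omega⟩⟩ : (i : Fin r) × Fin (k i)))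
    (fun _ => 1) (fun m _ => isHomogeneous_X K _)
  simpa [oddProd] using h

theorem pc_hom_even (K : Type) [Field K] {r : ℕ} (k : Fin r → ℕ) (i : Fin r) :
    (evenProd K k i).IsHomogeneous (k i / 2) := by
  have h := IsHomogeneous.prod (R := K) (Finset.univ : Finset (Fin (k i / 2)))
    (fun m => X (⟨i, ⟨2 * m.1 + 1, by have := m.2; omega⟩⟩ : (i : Fin r) × Fin (k i)))
    (fun _ => 1) (fun m _ => isHomogeneous_X K _)
  simpa [evenProd] using h

theorem pc_rel_even {K : Type} [Field K] [Fintype K] {r : ℕ} (k : Fin r → ℕ) (i : Fin r)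
    (hk : 0 < k i) (x : (Bool ⊕ ((i : Fin r) × Fin (k i - 1))) → Kˣ) (h : ¬ Odd (k i)) :
    eval ((parallelComp k).point K x) (oddProd K k i) * (x (Sum.inl true) : K) =
      (x (Sum.inl false) : K) * eval ((parallelComp k).point K x) (evenProd K k i) := by
  rw [Nat.not_odd_iff] at h
  have h1 : pcVert k i (2 * (k i / 2)) = Sum.inl true := by
    rw [pcVert, dif_neg (by omega), dif_neg (by omega)]
  have h2 := pc_aux_even (fun n => (x (pcVert k i n) : K)) (k i / 2)
  simp only [h1] at h2
  rw [pc_eval_odd, pc_eval_even, show (k i + 1) / 2 = k i / 2 by omega, h2]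
  simp [pcVert]

theorem pc_rel_odd {K : Type} [Field K] [Fintype K] {r : ℕ} (k : Fin r → ℕ) (i : Fin r)
    (x : (Bool ⊕ ((i : Fin r) × Fin (k i - 1))) → Kˣ) (h : Odd (k i)) :
    eval ((parallelComp k).point K x) (oddProd K k i) =
      (x (Sum.inl false) : K) * eval ((parallelComp k).point K x) (evenProd K k i) *
        (x (Sum.inl true) : K) := by
  rw [Nat.odd_iff] at h
  have h1 : pcVert k i (2 * (k i / 2) + 1) = Sum.inl true := by
    rw [pcVert, dif_neg (by omega), dif_neg (by omega)]
  have h2 := pc_aux_even (fun n => (x (pcVert k i n) : K)) (k i / 2)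
  rw [pc_eval_odd, pc_eval_even, show (k i + 1) / 2 = k i / 2 + 1 by omega,
    Finset.prod_range_succ, h1, ← mul_assoc, h2]
  simp [pcVert]

/-- **Equation (3.2).**  In the parallel composition of paths `P 0, ..., P (r-1)`, let
`f i` be the product of the edges of `P i` in odd positions and `g i` the product of
the edges of `P i` in even positions.  If `k i` and `k j` have the same parity and
`i ≠ j`, then `f i · g j - f j · g i ∈ I(X)`. -/
theorem oddProd_mul_evenProd_sub_mem_vanishingIdeal
    (K : Type) [Field K] [Fintype K] (r : ℕ) (hr : 2 ≤ r)
    (k : Fin r → ℕ) (hk : ∀ i, 0 < k i)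
    (i j : Fin r) (hij : i ≠ j) (hpar : Odd (k i) ↔ Odd (k j)) :
    oddProd K k i * evenProd K k j - oddProd K k j * evenProd K k i ∈
      (parallelComp k).vanishingIdeal K := by
  intro x d
  have hhom : (oddProd K k i * evenProd K k j - oddProd K k j * evenProd K k i).IsHomogeneous
      ((k i + 1) / 2 + k j / 2) := by
    refine IsHomogeneous.sub ((pc_hom_odd K k i).mul (pc_hom_even K k j)) ?_
    have h := (pc_hom_odd K k j).mul (pc_hom_even K k i)
    have e : (k j + 1) / 2 + k i / 2 = (k i + 1) / 2 + k j / 2 := by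
      rw [Nat.odd_iff, Nat.odd_iff] at hpar
      omega
    rwa [e] at h
  rw [homogeneousComponent_of_mem ((mem_homogeneousSubmodule _ _).mpr hhom)]
  split_ifs
  · rw [map_sub, map_mul, map_mul]
    by_cases h : Odd (k i)
    · rw [pc_rel_odd k i x h, pc_rel_odd k j x (hpar.1 h)]
      ring
    · have h1 := pc_rel_even k i (hk i) x h
      have h2 := pc_rel_even k j (hk j) x (fun h' => h (hpar.2 h'))
      refine (mul_eq_zero.1 ?_).resolve_right (x (Sum.inl true)).ne_zero
      linear_combination eval ((parallelComp k).point K x) (evenProd K k j) * h1 -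
        eval ((parallelComp k).point K x) (evenProd K k i) * h2
  · simp
end

section
/- Let G be a graph with X the projective toric subset it parameterizes, let H be a subgraph of G with no isolated vertices, and let Y be the projective toric subset parameterized by H. Under the inclusion of polynomial rings K[E_H] ⊆ K[E_G] induced by E_H ⊆ E_G, the vanishing ideal of Y satisfies I(Y) = I(X) ∩ K[E_H]. -/
open MvPolynomial

theorem homogeneousComponent_rename_aux {σ τ R : Type} [CommSemiring R] (f : σ → τ) (d : ℕ)
    (p : MvPolynomial σ R) :
    homogeneousComponent d (rename f p) = rename f (homogeneousComponent d p) := by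
  conv_lhs => rw [← sum_homogeneousComponent p, map_sum, map_sum]
  have h : ∀ i, homogeneousComponent d (rename f (homogeneousComponent i p)) =
      if i = d then rename f (homogeneousComponent d p) else 0 := by
    intro i
    have h1 : (rename f (homogeneousComponent i p)).IsHomogeneous i :=
      (homogeneousComponent_isHomogeneous i p).rename_isHomogeneous
    rw [homogeneousComponent_of_mem ((mem_homogeneousSubmodule _ _).mpr h1)]
    split_ifs with h1 h2 h2
    · rw [h1]
    · exact absurd h1.symm h2
    · exact absurd h2.symm h1
    · rfl
  simp only [h, Finset.sum_ite_eq', Finset.mem_range]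
  split_ifs with hd
  · rfl
  · rw [homogeneousComponent_eq_zero _ _ (by omega), map_zero]

/-- **Section 2.**  If `H` is the subgraph of `G` determined by a set `A` of edges,
and `Y` is the projective toric subset parameterized by `H`, then
`I(Y) = I(X) ∩ K[E_H]`:  a polynomial of `K[E_H]` lies in `I(Y)` exactly when, viewed
in `K[E_G]`, it lies in `I(X)`. -/
theorem vanishingIdeal_subgraph_eq_comap
    {V E : Type} [Fintype V] [DecidableEq V] [Fintype E] [DecidableEq E]
    (K : Type) [Field K] [Fintype K]
    (G : Multigraph V E) (hG : G.NoIsolated) (A : Finset E) :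
    (G.subgraph A).vanishingIdeal K =
      Ideal.comap (rename (Subtype.val : {e : E // e ∈ A} → E))
        (G.vanishingIdeal K) := by
  ext f
  rw [Ideal.mem_comap]
  change (∀ x d, _ = _) ↔ (∀ x d, _ = _)
  simp only [homogeneousComponent_rename_aux, eval_rename]
  constructor
  · intro h x d
    exact h (fun v => x v.1) d
  · intro h y d
    classical
    have := h (fun v => if hv : ∃ e ∈ A, G.Incident v e then y ⟨v, hv⟩ else 1) d
    convert this using 2
    congr 1
    funext e
    have h1 : ∃ e' ∈ A, G.Incident (G.fst e.1) e' := ⟨e.1, e.2, Or.inl rfl⟩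
    have h2 : ∃ e' ∈ A, G.Incident (G.snd e.1) e' := ⟨e.1, e.2, Or.inr rfl⟩
    simp only [Multigraph.point, Function.comp, dif_pos h1, dif_pos h2]
    rfl
end

section
/- Let G be the parallel composition of two paths, one of odd length k_1 and one of even length k_2, and let X be the projective toric subset parameterized by G. Then reg(G) = (k_1 + k_2 − 1)(q−2). -/
open MvPolynomial

namespace OddCycleReg

section General

variable {V E : Type} (K : Type) [Field K] [Fintype K]

theorem finrank_map_eq {M N P : Type*} [AddCommGroup M] [Module K M] [AddCommGroup N] [Module K N]
    [AddCommGroup P] [Module K P] (p : Submodule K M) (f : M →ₗ[K] N) (g : M →ₗ[K] P)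
    (h : ∀ x ∈ p, f x = 0 ↔ g x = 0) :
    Module.finrank K (p.map f) = Module.finrank K (p.map g) := by
  rw [← LinearMap.range_domRestrict, ← LinearMap.range_domRestrict]
  have hk : LinearMap.ker (f.domRestrict p) = LinearMap.ker (g.domRestrict p) := by
    ext x
    simpa using h x.1 x.2
  exact LinearEquiv.finrank_eq ((f.domRestrict p).quotKerEquivRange.symm.trans
    ((Submodule.quotEquivOfEq _ _ hk).trans (g.domRestrict p).quotKerEquivRange))

/-- Extend a torus point by `1` at `e₀`. -/
def ext [DecidableEq E] (e₀ : E) (y : {e : E // e ≠ e₀} → Kˣ) : E → Kˣ :=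
  fun e => if h : e = e₀ then 1 else y ⟨e, h⟩

/-- Evaluation at all normalized torus points. -/
noncomputable def evT [DecidableEq E] (e₀ : E) :
    MvPolynomial E K →ₗ[K] (({e : E // e ≠ e₀} → Kˣ) → K) :=
  LinearMap.pi fun y => (aeval (fun e => (ext K e₀ y e : K))).toLinearMap

theorem evT_apply [DecidableEq E] (e₀ : E) (f : MvPolynomial E K) (y) :
    evT K e₀ f y = eval (fun e => (ext K e₀ y e : K)) f := by
  simp [evT, aeval_eq_eval]

theorem eval_smul_hom {d : ℕ} {f : MvPolynomial E K} (hf : f.IsHomogeneous d) (c : K)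
    (p : E → K) : eval (fun e => c * p e) f = c ^ d * eval p f := by
  rw [eval_eq, eval_eq, Finset.mul_sum]
  refine Finset.sum_congr rfl fun m hm => ?_
  have hd : ∑ i ∈ m.support, m i = d := by
    have := hf (mem_support_iff.1 hm)
    rw [← this, Finsupp.weight_apply]
    simp [Finsupp.sum]
  simp only [mul_pow, Finset.prod_mul_distrib, Finset.prod_pow_eq_pow_sum, hd]
  ring

/-- The map `x ↦ G.point x` is surjective onto the torus, up to scalars. -/
def ProjSurj (G : Multigraph V E) : Prop :=
  ∀ t : E → Kˣ, ∃ (c : Kˣ) (x : V → Kˣ), ∀ e, t e = c * (x (G.fst e) * x (G.snd e))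

theorem norm_point [DecidableEq E] (e₀ : E) (t : E → Kˣ) :
    ∃ (c : Kˣ) (y : {e : E // e ≠ e₀} → Kˣ), ∀ e, t e = c * ext K e₀ y e := by
  refine ⟨t e₀, fun e => (t e₀)⁻¹ * t e, fun e => ?_⟩
  by_cases h : e = e₀
  · subst h; simp [ext]
  · simp [ext, h]

theorem hilbert_eq [DecidableEq E] (e₀ : E) (G : Multigraph V E) (hG : ProjSurj K G) (d : ℕ) :
    G.hilbert K d = Module.finrank K ((homogeneousSubmodule E K d).map (evT K e₀)) := by
  refine finrank_map_eq K _ _ _ fun f hf => ?_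
  have hf' : f.IsHomogeneous d := (mem_homogeneousSubmodule _ _).1 hf
  have h1 : (Ideal.Quotient.mkₐ K (G.vanishingIdeal K)).toLinearMap f = 0 ↔
      f ∈ G.vanishingIdeal K := by
    simp [Ideal.Quotient.eq_zero_iff_mem]
  have h2 : f ∈ G.vanishingIdeal K ↔ ∀ x : V → Kˣ, eval (G.point K x) f = 0 := by
    constructor
    · intro h x
      have := h x d
      rwa [homogeneousComponent_of_mem hf, if_pos rfl] at this
    · intro h x m
      rw [homogeneousComponent_of_mem hf]
      split_ifs
      · exact h x
      · simp
  rw [h1, h2]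
  constructor
  · intro h
    ext y
    rw [evT_apply]
    obtain ⟨c, x, hx⟩ := hG (ext K e₀ y)
    have : (fun e => (ext K e₀ y e : K)) = fun e => (c : K) * G.point K x e := by
      ext e; rw [hx e]; simp [Multigraph.point]
    rw [this, eval_smul_hom K hf', h x]
    simp
  · intro h x
    obtain ⟨c, y, hy⟩ := norm_point K e₀ (fun e => x (G.fst e) * x (G.snd e))
    have : G.point K x = fun e => (c : K) * (ext K e₀ y e : K) := by
      ext e
      have := congrArg (Units.val) (hy e)
      simpa [Multigraph.point] using this
    rw [this, eval_smul_hom K hf', ← evT_apply, h]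
    simp

theorem ncard_eq [DecidableEq E] [Fintype E] (e₀ : E) (G : Multigraph V E) (hG : ProjSurj K G) :
    (G.toricSet K).ncard = Nat.card ({e : E // e ≠ e₀} → Kˣ) := by
  have : G.toricSet K = Set.range fun y : {e : E // e ≠ e₀} → Kˣ =>
      MulAction.orbit Kˣ (fun e => (ext K e₀ y e : K)) := by
    ext s
    constructor
    · rintro ⟨x, rfl⟩
      obtain ⟨c, y, hy⟩ := norm_point K e₀ (fun e => x (G.fst e) * x (G.snd e))
      refine ⟨y, ?_⟩
      refine (MulAction.orbit_eq_iff.2 ⟨c, ?_⟩).symm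
      ext e
      have := congrArg (Units.val) (hy e)
      simpa [Multigraph.point, Units.smul_def] using this.symm
    · rintro ⟨y, rfl⟩
      obtain ⟨c, x, hx⟩ := hG (ext K e₀ y)
      refine ⟨x, ?_⟩
      refine (MulAction.orbit_eq_iff.2 ⟨c, ?_⟩).symm
      ext e
      simp [Multigraph.point, Units.smul_def, hx e]
  rw [this, ← Set.image_univ, Set.ncard_image_of_injective, Set.ncard_univ]
  intro y z hyz
  obtain ⟨c, hc⟩ := MulAction.orbit_eq_iff.1 hyz
  have hc1 : (c : K) = 1 := by
    have := congrFun hc e₀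
    simpa [ext, Units.smul_def] using this
  ext e
  have := congrFun hc e.1
  simpa [ext, Units.smul_def, e.2, hc1] using this.symm

theorem surj [DecidableEq E] [Fintype E] (e₀ : E) :
    (homogeneousSubmodule E K ((Fintype.card E - 1) * (Fintype.card K - 2))).map (evT K e₀) = ⊤ := by
  classical
  rw [eq_top_iff, ← (Pi.basisFun K _).span_eq, Submodule.span_le]
  rintro _ ⟨a, rfl⟩
  set D := (Fintype.card E - 1) * (Fintype.card K - 2)
  let F : MvPolynomial E K := ∏ e : {e : E // e ≠ e₀}, ∏ c ∈ Finset.univ.erase (a e),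
    (X e.1 - C (c : K) * X e₀)
  have hF : F.IsHomogeneous D := by
    have h1 : ∀ e ∈ (Finset.univ : Finset {e : E // e ≠ e₀}),
        (∏ c ∈ Finset.univ.erase (a e),
          (X e.1 - C (c : K) * X e₀ : MvPolynomial E K)).IsHomogeneous (Fintype.card K - 2) := by
      intro e _
      have h2 := IsHomogeneous.prod (Finset.univ.erase (a e))
        (fun c : Kˣ => (X e.1 - C (c : K) * X e₀ : MvPolynomial E K)) (fun _ => 1)
        (fun c _ => (isHomogeneous_X K e.1).sub (by
          simpa using (isHomogeneous_C E (c : K)).mul (isHomogeneous_X K e₀)))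
      have h3 : ∑ _c ∈ Finset.univ.erase (a e), 1 = Fintype.card K - 2 := by
        rw [Finset.sum_const, Finset.card_erase_of_mem (Finset.mem_univ _), Finset.card_univ,
          Fintype.card_units]
        simp; omega
      rwa [h3] at h2
    have h4 := IsHomogeneous.prod _ _ _ h1
    have h5 : ∑ _e : {e : E // e ≠ e₀}, (Fintype.card K - 2) = D := by
      simp [D, Fintype.card_subtype_compl]
    rwa [h5] at h4
  have hval : ∀ y, evT K e₀ F y = ∏ e : {e : E // e ≠ e₀}, ∏ c ∈ Finset.univ.erase (a e),
      ((y e : K) - c) := by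
    intro y
    rw [evT_apply]
    simp only [F, map_prod, map_sub, map_mul, eval_X, eval_C]
    refine Finset.prod_congr rfl fun e _ => Finset.prod_congr rfl fun c _ => ?_
    simp [ext, e.2]
  have hne : evT K e₀ F a ≠ 0 := by
    rw [hval]
    refine Finset.prod_ne_zero_iff.2 fun e _ => Finset.prod_ne_zero_iff.2 fun c hc => ?_
    rw [sub_ne_zero]
    intro h
    exact (Finset.mem_erase.1 hc).1 (Units.ext h.symm)
  have hz : ∀ y, y ≠ a → evT K e₀ F y = 0 := by
    intro y hy
    obtain ⟨e, he⟩ := Function.ne_iff.1 hy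
    rw [hval]
    refine Finset.prod_eq_zero (Finset.mem_univ e) (Finset.prod_eq_zero (i := y e) ?_ (sub_self _))
    exact Finset.mem_erase.2 ⟨he, Finset.mem_univ _⟩
  refine ⟨(evT K e₀ F a)⁻¹ • F, Submodule.smul_mem _ _ ((mem_homogeneousSubmodule _ _).2 hF), ?_⟩
  rw [map_smul]
  ext y
  by_cases hy : y = a
  · subst hy; simp [hne]
  · simp [hz y hy, hy]

theorem not_surj [DecidableEq E] [Fintype E] (e₀ : E) (d : ℕ)
    (hd : d < (Fintype.card E - 1) * (Fintype.card K - 2)) :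
    (homogeneousSubmodule E K d).map (evT K e₀) ≠ ⊤ := by
  classical
  intro htop
  let L : (({e : E // e ≠ e₀} → Kˣ) → K) →ₗ[K] K :=
    ∑ y : {e : E // e ≠ e₀} → Kˣ, (∏ e, (y e : K)) • LinearMap.proj y
  have hL : ∀ φ, L φ = ∑ y : {e : E // e ≠ e₀} → Kˣ, (∏ e, (y e : K)) * φ y := by
    intro φ; simp [L]
  have hmon : ∀ m : E →₀ ℕ, m.degree = d → L (evT K e₀ (monomial m 1)) = 0 := by
    intro m hm
    have h1 : ∀ y : {e : E // e ≠ e₀} → Kˣ, (∏ e, (y e : K)) * evT K e₀ (monomial m 1) y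
        = ∏ e, ((y e : K) ^ (m e.1 + 1)) := by
      intro y
      rw [evT_apply, eval_monomial, one_mul, Finsupp.prod_fintype _ _ (by simp),
        ← Fintype.prod_subtype_mul_prod_subtype (fun e => e ≠ e₀)]
      have h2 : ∏ e : {e : E // ¬ e ≠ e₀}, ((ext K e₀ y e.1 : K) ^ m e.1) = 1 := by
        refine Finset.prod_eq_one fun e _ => ?_
        have := e.2
        push Not at this
        simp [ext, this]
      rw [h2, mul_one, ← Finset.prod_mul_distrib]
      refine Finset.prod_congr rfl fun e _ => ?_
      simp [ext, e.2, pow_succ']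
    rw [hL]
    simp only [h1]
    rw [← Fintype.prod_sum (fun (e : {e : E // e ≠ e₀}) (c : Kˣ) => (c : K) ^ (m e.1 + 1))]
    have hex : ∃ e : {e : E // e ≠ e₀}, m e.1 < Fintype.card K - 2 := by
      by_contra hcon
      push Not at hcon
      have h3 := Finset.sum_le_sum (s := Finset.univ) fun e _ => hcon e
      have h4 : ∑ _e : {e : E // e ≠ e₀}, (Fintype.card K - 2)
          = (Fintype.card E - 1) * (Fintype.card K - 2) := by
        simp [Fintype.card_subtype_compl]
      have h5 : ∑ e : {e : E // e ≠ e₀}, m e.1 ≤ m.degree := by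
        rw [Finsupp.degree_eq_sum, ← Fintype.sum_subtype_add_sum_subtype (fun e => e ≠ e₀)]
        exact Nat.le_add_right _ _
      omega
    obtain ⟨e, he⟩ := hex
    refine Finset.prod_eq_zero (Finset.mem_univ e) ?_
    have := FiniteField.sum_pow_units K (m e.1 + 1)
    rw [if_neg] at this
    · exact this
    · intro hdvd
      have := Nat.le_of_dvd (by omega) hdvd
      omega
  have hall : ∀ f ∈ homogeneousSubmodule E K d, L (evT K e₀ f) = 0 := by
    intro f hf
    have hf' : f.IsHomogeneous d := (mem_homogeneousSubmodule _ _).1 hf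
    rw [f.as_sum, map_sum, map_sum]
    refine Finset.sum_eq_zero fun m hm => ?_
    have hdeg : m.degree = d := by
      have := hf' (mem_support_iff.1 hm)
      rw [← this, Finsupp.weight_apply]; simp [Finsupp.sum, Finsupp.degree_apply]
    have : monomial m (coeff m f) = coeff m f • monomial m (1 : K) := by
      simp [smul_monomial]
    rw [this, map_smul, map_smul, hmon m hdeg, smul_zero]
  have hmem : (Pi.single 1 1 : ({e : E // e ≠ e₀} → Kˣ) → K) ∈
      (homogeneousSubmodule E K d).map (evT K e₀) := htop ▸ Submodule.mem_top
  obtain ⟨f, hf, hfe⟩ := hmem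
  have := hall f hf
  rw [hfe, hL, Finset.sum_eq_single 1] at this
  · simp at this
  · intro y _ hy; simp [hy]
  · simp

theorem reg_eq [DecidableEq E] [Fintype E] (e₀ : E) (G : Multigraph V E) (hG : ProjSurj K G) :
    G.reg K = (Fintype.card E - 1) * (Fintype.card K - 2) := by
  classical
  have key : ∀ d, G.hilbert K d = (G.toricSet K).ncard ↔
      (homogeneousSubmodule E K d).map (evT K e₀) = ⊤ := by
    intro d
    rw [hilbert_eq K e₀ G hG, ncard_eq K e₀ G hG]
    have h : Module.finrank K (({e : E // e ≠ e₀} → Kˣ) → K)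
        = Nat.card ({e : E // e ≠ e₀} → Kˣ) := by
      rw [Module.finrank_fintype_fun_eq_card, Nat.card_eq_fintype_card]
    rw [← h]
    constructor
    · exact Submodule.eq_top_of_finrank_eq
    · intro h; rw [h, finrank_top]
  unfold Multigraph.reg
  refine le_antisymm (Nat.sInf_le ((key _).2 (surj K e₀))) ?_
  refine le_csInf ⟨_, (key _).2 (surj K e₀)⟩ fun d hd => ?_
  by_contra hlt
  exact not_surj K e₀ d (not_le.1 hlt) ((key d).1 hd)

end General

/-- Vertex values along a path determined by edge values. -/
def pathVal {A : Type} [CommGroup A] (t : ℕ → A) (c : A) : ℕ → A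
  | 0 => 1
  | j + 1 => t j * c * (pathVal t c j)⁻¹

theorem pathVal_eq {A : Type} [CommGroup A] (t : ℕ → A) (c : A) (j : ℕ) :
    pathVal t c j = pathVal t 1 j * c ^ (j % 2) := by
  induction j with
  | zero => simp [pathVal]
  | succ j ih =>
    rw [pathVal, pathVal, ih]
    rcases Nat.mod_two_eq_zero_or_one j with h | h
    · have : (j + 1) % 2 = 1 := by omega
      rw [h, this]; simp; exact mul_right_comm _ _ _
    · have : (j + 1) % 2 = 0 := by omega
      rw [h, this]; simp only [pow_one, pow_zero, mul_one, mul_inv, mul_assoc]; rw [mul_comm (pathVal t 1 j)⁻¹, mul_inv_cancel_left]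

theorem projSurj_parallel (K : Type) [Field K] [Fintype K] (k₁ k₂ : ℕ)
    (h₁ : Odd k₁) (h₂ : Even k₂) : ProjSurj K (parallelComp ![k₁, k₂]) := by
  intro t
  let s : Fin 2 → ℕ → Kˣ := fun i j => if h : j < ![k₁, k₂] i then t ⟨i, ⟨j, h⟩⟩ else 1
  let c : Kˣ := pathVal (s 1) 1 k₂ * (pathVal (s 0) 1 k₁)⁻¹
  have hc : pathVal (s 0) c k₁ = pathVal (s 1) c k₂ := by
    rw [pathVal_eq (s 0) c, pathVal_eq (s 1) c, Nat.odd_iff.1 h₁, Nat.even_iff.1 h₂]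
    simp [c]
  let x : Bool ⊕ ((i : Fin 2) × Fin (![k₁, k₂] i - 1)) → Kˣ
    | Sum.inl false => 1
    | Sum.inl true => pathVal (s 0) c k₁
    | Sum.inr ⟨i, j⟩ => pathVal (s i) c (j.1 + 1)
  have hx : ∀ i j, j ≤ ![k₁, k₂] i → x (pcVert ![k₁, k₂] i j) = pathVal (s i) c j := by
    intro i j hj
    unfold pcVert
    split_ifs with h0 h
    · subst h0; rfl
    · simp only [x]
      congr 1; omega
    · have hj' : j = ![k₁, k₂] i := by omega
      subst hj'
      simp only [x]
      fin_cases i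
      · rfl
      · exact hc
  refine ⟨c⁻¹, x, ?_⟩
  rintro ⟨i, j⟩
  have e1 := hx i j.1 j.2.le
  have e2 := hx i (j.1 + 1) j.2
  change t ⟨i, j⟩ = c⁻¹ * (x (pcVert ![k₁, k₂] i j.1) * x (pcVert ![k₁, k₂] i (j.1 + 1)))
  rw [e1, e2, pathVal]
  have : s i j.1 = t ⟨i, j⟩ := by
    simp only [s, dif_pos j.2]
  rw [this]
  generalize pathVal (s i) c j.1 = u
  rw [mul_comm u, inv_mul_cancel_right, mul_comm (t _) c, inv_mul_cancel_left]

end OddCycleReg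

/-- **Table 2, case `l = 1, r = 2`.**  Let `G` be the parallel composition of a path
of odd length `k₁` and a path of even length `k₂`.  Then
`reg G = (k₁ + k₂ - 1)(q-2)`, where `q = |K|`. -/
theorem reg_parallelComp_one_odd_one_even
    (K : Type) [Field K] [Fintype K] (k₁ k₂ : ℕ)
    (hk₁ : 0 < k₁) (hk₂ : 0 < k₂) (h₁ : Odd k₁) (h₂ : Even k₂) :
    (parallelComp ![k₁, k₂]).reg K = (k₁ + k₂ - 1) * (Fintype.card K - 2) := by
  have h := OddCycleReg.reg_eq K (⟨0, ⟨0, hk₁⟩⟩ : (i : Fin 2) × Fin (![k₁, k₂] i))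
    (parallelComp ![k₁, k₂]) (OddCycleReg.projSurj_parallel K k₁ k₂ h₁ h₂)
  rw [h]
  simp [Fintype.card_sigma, Fin.sum_univ_two]
end
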